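/- arXiv:2501.11277 — 4 statements merged into one kernel-verified Lean document; each statement's English description precedes it below -/
import Mathlib

section
/- Let p be a prime and F a perfect field of characteristic ≠ p containing all p-power roots of unity, and let Δ be a finitely generated subgroup of F^× with torsion subgroup Δ_tor. Then Gal(F(Δ^{1/p^∞})/F) is isomorphic to Z_p^d for some d ≤ rank(Δ/Δ_tor). -/
/-!
Fix a compatible system of primitive `p ^ n`-th roots of unity in `F`, and let `L = F(Δ^{1/p^∞})`.
For `σ` in `Gal(L/F)` and `a` in `Δ`, the cocycles `σ y / y`, with `y` running through the
`p`-power roots of `a`, are the powers of that system to one `p`-adic exponent, and this defines a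
pairing `Gal(L/F) × Δ → ℤ_p`. It has trivial left kernel because `L` is generated by the roots of
the elements of `Δ`. As `ℤ_p` is torsion-free, a homomorphism `Δ → ℤ_p` is determined by its values
at `rank Δ` independent elements, so `Gal(L/F)` embeds continuously into `ℤ_p ^ rank Δ`. The image
is compact, and a closed subgroup of `ℤ_p ^ r` is a `ℤ_p`-submodule because `ℤ` is dense in `ℤ_p`;
hence it is free of rank at most `r`.
-/

section CompactPadic

open Filter Topology

variable {p : ℕ} [Fact p.Prime]

theorem exists_submodule_toAddSubgroup_eq_of_isClosed {M : Type*} [AddCommGroup M]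
    [Module ℤ_[p] M] [TopologicalSpace M] [ContinuousSMul ℤ_[p] M] (S : AddSubgroup M)
    (hS : IsClosed (S : Set M)) : ∃ N : Submodule ℤ_[p] M, N.toAddSubgroup = S := by
  have smul_mem (x : ℤ_[p]) {v : M} (hv : v ∈ S) : x • v ∈ S := by
    refine PadicInt.denseRange_intCast.induction_on (p := fun x : ℤ_[p] ↦ x • v ∈ S) x
      (hS.preimage (by fun_prop)) fun k ↦ ?_
    simpa only [Int.cast_smul_eq_zsmul] using S.zsmul_mem hv k
  exact ⟨{ S with smul_mem' := fun x _ hv ↦ smul_mem x hv }, rfl⟩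

theorem exists_continuousLinearEquiv_pi_of_submodule {m : ℕ}
    (N : Submodule ℤ_[p] (Fin m → ℤ_[p])) :
    ∃ d ≤ m, Nonempty (N ≃L[ℤ_[p]] (Fin d → ℤ_[p])) := by
  obtain ⟨d, ⟨b⟩⟩ := N.nonempty_basis_of_pid (Pi.basisFun ℤ_[p] (Fin m))
  have hd : d ≤ m := by
    simpa only [Module.finrank_eq_card_basis b, Module.finrank_fin_fun, Fintype.card_fin]
      using N.finrank_le
  have hcont : Continuous b.equivFun.symm := b.equivFun.symm.toLinearMap.continuous_on_pi
  exact ⟨d, hd, ⟨.symm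
    { b.equivFun.symm with
      continuous_toFun := hcont
      continuous_invFun := hcont.continuous_symm_of_equiv_compact_to_t2
        (f := b.equivFun.symm.toEquiv) }⟩⟩

theorem nonempty_continuousMulEquiv_of_bijective {G H : Type*} [Group G] [TopologicalSpace G]
    [CompactSpace G] [Group H] [TopologicalSpace H] [T2Space H] (f : G →* H)
    (hf : Continuous f) (hbij : Function.Bijective f) : Nonempty (G ≃ₜ* H) :=
  ⟨{ MulEquiv.ofBijective f hbij with
      continuous_toFun := hf
      continuous_invFun := hf.continuous_symm_of_equiv_compact_to_t2
        (f := Equiv.ofBijective f hbij) }⟩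

theorem exists_continuousMulEquiv_padicInt_pi_of_injective {G : Type*} [Group G]
    [TopologicalSpace G] [CompactSpace G] {m : ℕ} (f : G →* Multiplicative (Fin m → ℤ_[p]))
    (hf : Continuous f) (hinj : Function.Injective f) :
    ∃ d ≤ m, Nonempty (G ≃ₜ* Multiplicative (Fin d → ℤ_[p])) := by
  have hclosed : IsClosed (f.range.toAddSubgroup' : Set (Fin m → ℤ_[p])) :=
    (isCompact_range hf).isClosed.preimage continuous_ofAdd
  obtain ⟨N, hN⟩ := exists_submodule_toAddSubgroup_eq_of_isClosed (p := p) _ hclosed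
  have mem_N (v : Fin m → ℤ_[p]) : v ∈ N ↔ ∃ g, f g = Multiplicative.ofAdd v := by
    rw [← Submodule.mem_toAddSubgroup, hN]
    rfl
  obtain ⟨d, hd, ⟨e⟩⟩ := exists_continuousLinearEquiv_pi_of_submodule N
  let φ : G →* Multiplicative (Fin d → ℤ_[p]) :=
    .mk' (fun g ↦ .ofAdd (e ⟨(f g).toAdd, (mem_N _).2 ⟨g, rfl⟩⟩)) fun g h ↦ by
      simp only [← ofAdd_add, ← map_add, map_mul, toAdd_mul]
      rfl
  refine ⟨d, hd, nonempty_continuousMulEquiv_of_bijective φ ?_ ⟨fun g h hgh ↦ ?_, fun y ↦ ?_⟩⟩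
  · exact continuous_ofAdd.comp
      (e.continuous.comp ((continuous_toAdd.comp hf).subtype_mk _))
  · exact hinj (congrArg Subtype.val (e.injective hgh))
  · obtain ⟨g, hg⟩ := (mem_N _).1 (e.symm y.toAdd).2
    have hg' : (f g).toAdd = (e.symm y.toAdd : N) := congrArg Multiplicative.toAdd hg
    exact ⟨g, congrArg Multiplicative.ofAdd (e.eq_symm_apply.1 (Subtype.ext hg'))⟩

theorem continuous_of_eventually_toZModPow_eq_zero {G : Type*} [Group G] [TopologicalSpace G]
    [IsTopologicalGroup G] (f : G →* Multiplicative ℤ_[p])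
    (h : ∀ n, ∀ᶠ g in 𝓝 1, PadicInt.toZModPow n (f g).toAdd = 0) : Continuous f := by
  have htoAdd : Tendsto (fun g ↦ (f g).toAdd) (𝓝 1) (𝓝 0) := by
    refine Metric.tendsto_nhds.2 fun ε hε ↦ ?_
    obtain ⟨n, hn⟩ := PadicInt.exists_pow_neg_lt p hε
    filter_upwards [h n] with g hg
    rw [dist_zero_right]
    rw [← RingHom.mem_ker, PadicInt.ker_toZModPow, ← PadicInt.norm_le_pow_iff_mem_span_pow] at hg
    exact hg.trans_lt hn
  exact continuous_of_tendsto_nhds_one f ((continuous_ofAdd.tendsto (0 : ℤ_[p])).comp htoAdd)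

end CompactPadic

section Rank

theorem exists_smul_mem_span_of_rank_eq {R M : Type*} [CommRing R] [IsDomain R] [AddCommGroup M]
    [Module R M] {r : ℕ} (h : Module.rank R M = r) :
    ∃ v : Fin r → M, ∀ x, ∃ a : R, a ≠ 0 ∧ a • x ∈ Submodule.span R (Set.range v) := by
  obtain ⟨v, hv⟩ := exists_linearIndependent_of_le_rank h.ge
  refine ⟨v, fun x ↦ ?_⟩
  have hspan : Module.rank R (Submodule.span R (Set.range v)) = r := by
    rw [rank_eq_card_basis (Module.Basis.span hv), Fintype.card_fin]
  have hquot : Module.rank R (M ⧸ Submodule.span R (Set.range v)) = 0 := by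
    have hadd := (Submodule.span R (Set.range v)).rank_quotient_add_rank
    rw [hspan, h] at hadd
    exact Cardinal.eq_of_add_eq_add_right (by rw [hadd, zero_add]) Cardinal.natCast_lt_aleph0
  obtain ⟨a, ha, hax⟩ := rank_eq_zero_iff.1 hquot (Submodule.Quotient.mk x)
  exact ⟨a, ha, (Submodule.Quotient.mk_eq_zero _).1 hax⟩

theorem exists_forall_monoidHom_eq_one_of_rank_eq {A : Type*} [CommGroup A] {r : ℕ}
    (h : Module.rank ℤ (Additive A) = r) (B : Type*) [CommGroup B] [IsMulTorsionFree B] :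
    ∃ v : Fin r → A, ∀ f : A →* B, (∀ i, f (v i) = 1) → f = 1 := by
  obtain ⟨v, hv⟩ := exists_smul_mem_span_of_rank_eq h
  refine ⟨fun i ↦ (v i).toMul, fun f hf ↦ MonoidHom.ext fun a ↦ ?_⟩
  let g : Additive A →ₗ[ℤ] Additive B := f.toAdditive.toIntLinearMap
  have hle : Submodule.span ℤ (Set.range v) ≤ g.ker :=
    Submodule.span_le.2 (Set.range_subset_iff.2 hf)
  obtain ⟨m, hm, hma⟩ := hv (.ofMul a)
  have hfa : f a ^ m = 1 := (map_zpow f a m).symm.trans (hle hma)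
  exact (IsMulTorsionFree.zpow_eq_one_iff_left hm).1 hfa

theorem rank_additive_eq_of_quotient_torsion {A : Type*} [CommGroup A] {r : ℕ}
    (e : A ⧸ CommGroup.torsion A ≃* Multiplicative (Fin r → ℤ)) :
    Module.rank ℤ (Additive A) = r := by
  let π : A →* Multiplicative (Fin r → ℤ) := e.toMonoidHom.comp (QuotientGroup.mk' _)
  let f : Additive A →ₗ[ℤ] (Fin r → ℤ) := (MonoidHom.toAdditiveLeft π).toIntLinearMap
  have hf : Function.Surjective f :=
    e.surjective.comp (QuotientGroup.mk'_surjective (CommGroup.torsion A))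
  have hker : Module.rank ℤ f.ker = 0 := by
    refine rank_eq_zero_iff.2 fun ⟨x, hx⟩ ↦ ?_
    have hx' : IsOfFinOrder x.toMul :=
      (QuotientGroup.eq_one_iff _).1 (e.map_eq_one_iff.1 hx)
    obtain ⟨n, hn, hxn⟩ := isOfFinOrder_iff_pow_eq_one.1 hx'
    exact ⟨n, by exact_mod_cast hn.ne', Subtype.ext ((natCast_zsmul x n).trans hxn)⟩
  simpa [hker] using f.lift_rank_eq_of_surjective hf

end Rank

section RootSystems

theorem pow_pow_eq_of_forall_succ_pow_eq {M : Type*} [Monoid M] {p : ℕ} {s : ℕ → M}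
    (hs : ∀ n, s (n + 1) ^ p = s n) (n : ℕ) : s n ^ p ^ n = s 0 := by
  induction n with
  | zero => rw [pow_zero, pow_one]
  | succ n ih => rw [pow_succ', pow_mul, hs, ih]

theorem pow_eq_pow_iff_natCast_eq_of_isPrimitiveRoot {M : Type*} [CommMonoid M] {ζ : M} {N : ℕ}
    [NeZero N] (hζ : IsPrimitiveRoot ζ N) {k l : ℕ} : ζ ^ k = ζ ^ l ↔ (k : ZMod N) = l := by
  rw [(hζ.isOfFinOrder NeZero.out).pow_eq_pow_iff_modEq, ← hζ.eq_orderOf,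
    ZMod.natCast_eq_natCast_iff]

/-- A compatible system of primitive `p ^ n`-th roots of unity, that is, a generator of the
Tate module `T_p(μ)`. -/
structure IsPrimitiveRootSystem {R : Type*} [CommMonoid R] (p : ℕ) (ζ : ℕ → R) : Prop where
  isPrimitiveRoot (n : ℕ) : IsPrimitiveRoot (ζ n) (p ^ n)
  pow_succ_eq (n : ℕ) : ζ (n + 1) ^ p = ζ n

theorem exists_isPrimitiveRootSystem (p : ℕ) [Fact p.Prime] (K : Type*) [Field K] [IsSepClosed K]
    [NeZero (p : K)] : ∃ ζ : ℕ → K, IsPrimitiveRootSystem p ζ := by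
  obtain ⟨μ, hμ⟩ := HasEnoughRootsOfUnity.exists_primitiveRoot K p
  choose root root_pow using fun x : K ↦ IsSepClosed.exists_pow_nat_eq x p
  let s : ℕ → K := fun n ↦ root^[n] μ
  have hs (n : ℕ) : s (n + 1) ^ p = s n := by
    simp only [s, Function.iterate_succ_apply', root_pow]
  have hp : p.Prime := Fact.out
  have horder (n : ℕ) : orderOf (s n) = p ^ (n + 1) := by
    refine orderOf_eq_prime_pow ?_ ?_
    · exact pow_pow_eq_of_forall_succ_pow_eq hs n ▸ hμ.ne_one hp.one_lt
    · rw [pow_succ, pow_mul, pow_pow_eq_of_forall_succ_pow_eq hs]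
      exact hμ.pow_eq_one
  -- `s n` has order `p ^ (n + 1)`, hence the shift by one.
  refine ⟨fun n ↦ s n ^ p, fun n ↦ ?_, fun n ↦ by rw [hs]⟩
  exact (horder n ▸ IsPrimitiveRoot.orderOf (s n)).pow (pow_pos hp.pos _) (pow_succ' p n)

variable {R : Type*} [CommRing R] {p : ℕ} [Fact p.Prime] {ζ : ℕ → R}

/-- The power `(ζ n) ^ x` of a `p ^ n`-th root of unity `ζ n` to a `p`-adic integer exponent `x`,
computed from the residue of `x` modulo `p ^ n`. -/
noncomputable def padicPow (ζ : ℕ → R) (x : ℤ_[p]) (n : ℕ) : R :=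
  ζ n ^ (PadicInt.toZModPow n x).val

theorem padicPow_zero (ζ : ℕ → R) (n : ℕ) : padicPow ζ (0 : ℤ_[p]) n = 1 := by
  rw [padicPow, map_zero, ZMod.val_zero, pow_zero]

namespace IsPrimitiveRootSystem

theorem padicPow_add (hζ : IsPrimitiveRootSystem p ζ) (x y : ℤ_[p]) (n : ℕ) :
    padicPow ζ (x + y) n = padicPow ζ x n * padicPow ζ y n := by
  rw [padicPow, padicPow, padicPow, ← pow_add,
    pow_eq_pow_iff_natCast_eq_of_isPrimitiveRoot (hζ.isPrimitiveRoot n)]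
  simp only [Nat.cast_add, ZMod.natCast_zmod_val, map_add]

theorem padicPow_eq_padicPow_iff (hζ : IsPrimitiveRootSystem p ζ) {x y : ℤ_[p]} {n : ℕ} :
    padicPow ζ x n = padicPow ζ y n ↔ PadicInt.toZModPow n x = PadicInt.toZModPow n y := by
  rw [padicPow, padicPow, pow_eq_pow_iff_natCast_eq_of_isPrimitiveRoot (hζ.isPrimitiveRoot n),
    ZMod.natCast_zmod_val, ZMod.natCast_zmod_val]

theorem exists_padicPow_eq [IsDomain R] (hζ : IsPrimitiveRootSystem p ζ) {u : ℕ → R}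
    (hu0 : u 0 = 1) (hu : ∀ n, u (n + 1) ^ p = u n) : ∃ x : ℤ_[p], ∀ n, padicPow ζ x n = u n := by
  have huk (n : ℕ) : ∃ k, ζ n ^ k = u n :=
    let ⟨k, _, hk⟩ := (hζ.isPrimitiveRoot n).eq_pow_of_pow_eq_one
      ((pow_pow_eq_of_forall_succ_pow_eq hu n).trans hu0)
    ⟨k, hk⟩
  choose k hk using huk
  have hcompat (n : ℕ) : (p : ℤ) ^ n ∣ (k (n + 1) : ℤ) - (k n : ℤ) := by
    have hpow : ζ n ^ k (n + 1) = ζ n ^ k n := by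
      rw [← hζ.pow_succ_eq n, pow_right_comm, hk, hu, hζ.pow_succ_eq, hk]
    rw [pow_eq_pow_iff_natCast_eq_of_isPrimitiveRoot (hζ.isPrimitiveRoot n)] at hpow
    rw [← Nat.cast_pow, ← ZMod.intCast_eq_intCast_iff_dvd_sub]
    simpa only [Int.cast_natCast] using hpow.symm
  refine ⟨.ofIntSeq _ (PadicInt.isCauSeq_padicNorm_of_pow_dvd_sub (k · : ℕ → ℤ) p hcompat),
    fun n ↦ ?_⟩
  rw [padicPow, ← hk, pow_eq_pow_iff_natCast_eq_of_isPrimitiveRoot (hζ.isPrimitiveRoot n),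
    ZMod.natCast_zmod_val, PadicInt.toZModPow_ofIntSeq_of_pow_dvd_sub (k · : ℕ → ℤ) p hcompat,
    Int.cast_natCast]

end IsPrimitiveRootSystem

end RootSystems

section Kummer

open IntermediateField Polynomial Topology

variable {F L : Type*} [Field F] [Field L] [Algebra F L]

theorem exists_eq_algebraMap_mul_of_pow_eq_pow {ζ : F} {N : ℕ} [NeZero N]
    (hζ : IsPrimitiveRoot ζ N) {y z : L} (hy : y ≠ 0) (h : z ^ N = y ^ N) :
    ∃ u : F, u ^ N = 1 ∧ z = algebraMap F L u * y := by
  have hdiv : (z / y) ^ N = 1 := by rw [div_pow, h, div_self (pow_ne_zero N hy)]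
  obtain ⟨k, -, hk⟩ :=
    (hζ.map_of_injective (algebraMap F L).injective).eq_pow_of_pow_eq_one hdiv
  refine ⟨ζ ^ k, by rw [pow_right_comm, hζ.pow_eq_one, one_pow], ?_⟩
  rw [map_pow, hk, div_mul_cancel₀ z hy]

theorem ne_zero_of_pow_eq_algebraMap_unit {a : Fˣ} {y : L} {N : ℕ} (hN : N ≠ 0)
    (hy : y ^ N = algebraMap F L a) : y ≠ 0 := by
  rintro rfl
  exact (map_ne_zero (algebraMap F L)).2 a.ne_zero (hy.symm.trans (zero_pow hN))

theorem exists_pow_eq_one_and_forall_root_apply_eq {ζ : F} {N : ℕ} [NeZero N]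
    (hζ : IsPrimitiveRoot ζ N) {a : Fˣ} {y : L} (hy : y ^ N = algebraMap F L a)
    (σ : Gal(L/F)) :
    ∃ u : F, u ^ N = 1 ∧ ∀ z : L, z ^ N = algebraMap F L a → σ z = algebraMap F L u * z := by
  have hy0 := ne_zero_of_pow_eq_algebraMap_unit NeZero.out hy
  obtain ⟨u, hu, hσ⟩ := exists_eq_algebraMap_mul_of_pow_eq_pow hζ hy0 (z := σ y) (by
    rw [← map_pow, hy, AlgEquiv.commutes])
  refine ⟨u, hu, fun z hz ↦ ?_⟩
  obtain ⟨v, -, rfl⟩ := exists_eq_algebraMap_mul_of_pow_eq_pow hζ hy0 (hz.trans hy.symm)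
  rw [map_mul, AlgEquiv.commutes, hσ, mul_left_comm]

variable {p : ℕ} [Fact p.Prime]

/-- The unit `a` of `F` has a `p ^ n`-th root in `L` for every `n`. -/
def HasPrimePowRoots (p : ℕ) (L : Type*) [Field L] [Algebra F L] (a : Fˣ) : Prop :=
  ∀ n : ℕ, ∃ y : L, y ^ p ^ n = algebraMap F L a

/-- `x` is the Kummer exponent of the pair `(σ, a)`: writing `y` for a `p ^ n`-th root of `a`, the
Kummer cocycle `σ y / y` is `(ζ n) ^ x`. -/
def IsKummerExponent (ζ : ℕ → F) (σ : Gal(L/F)) (a : Fˣ) (x : ℤ_[p]) : Prop :=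
  ∀ (n : ℕ) (y : L), y ^ p ^ n = algebraMap F L a → σ y = algebraMap F L (padicPow ζ x n) * y

variable {ζ : ℕ → F} {σ τ : Gal(L/F)} {a b : Fˣ} {x x' : ℤ_[p]}

theorem exists_isKummerExponent (hζ : IsPrimitiveRootSystem p ζ) (ha : HasPrimePowRoots p L a)
    (σ : Gal(L/F)) : ∃ x : ℤ_[p], IsKummerExponent ζ σ a x := by
  choose y hy using ha
  choose u hu hσ using fun n ↦
    exists_pow_eq_one_and_forall_root_apply_eq (hζ.isPrimitiveRoot n) (hy n) σ
  have hu_succ (n : ℕ) : u (n + 1) ^ p = u n := by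
    have hroot : (y (n + 1) ^ p) ^ p ^ n = algebraMap F L a := by rw [← pow_mul, ← pow_succ', hy]
    have hne : y (n + 1) ^ p ≠ 0 := ne_zero_of_pow_eq_algebraMap_unit NeZero.out hroot
    refine (algebraMap F L).injective (mul_right_cancel₀ hne ?_)
    rw [← hσ n _ hroot, map_pow σ, hσ (n + 1) _ (hy (n + 1)), mul_pow, map_pow]
  obtain ⟨x, hx⟩ := hζ.exists_padicPow_eq (by simpa only [pow_zero, pow_one] using hu 0) hu_succ
  exact ⟨x, fun n z hz ↦ by rw [hx, hσ n z hz]⟩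

namespace IsKummerExponent

theorem padicPow_eq (hx : IsKummerExponent ζ σ a x) (hx' : IsKummerExponent ζ τ a x')
    {y : L} {n : ℕ} (hy : y ^ p ^ n = algebraMap F L a) (h : σ y = τ y) :
    padicPow ζ x n = padicPow ζ x' n := by
  have hne : y ≠ 0 := ne_zero_of_pow_eq_algebraMap_unit NeZero.out hy
  refine (algebraMap F L).injective (mul_right_cancel₀ hne ?_)
  rw [← hx n y hy, ← hx' n y hy, h]

theorem unique (hζ : IsPrimitiveRootSystem p ζ) (ha : HasPrimePowRoots p L a)
    (hx : IsKummerExponent ζ σ a x) (hx' : IsKummerExponent ζ σ a x') : x = x' := by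
  refine PadicInt.ext_of_toZModPow.1 fun n ↦ ?_
  obtain ⟨y, hy⟩ := ha n
  exact hζ.padicPow_eq_padicPow_iff.1 (hx.padicPow_eq hx' hy rfl)

theorem one (ζ : ℕ → F) (a : Fˣ) : IsKummerExponent ζ (1 : Gal(L/F)) a (0 : ℤ_[p]) :=
  fun n y _ ↦ by rw [padicPow_zero, map_one, one_mul, AlgEquiv.one_apply]

theorem mul_left (hζ : IsPrimitiveRootSystem p ζ) (hx : IsKummerExponent ζ σ a x)
    (hx' : IsKummerExponent ζ τ a x') : IsKummerExponent ζ (σ * τ) a (x + x') := fun n y hy ↦ by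
  rw [AlgEquiv.mul_apply, hx' n y hy, map_mul, AlgEquiv.commutes, hx n y hy, hζ.padicPow_add,
    map_mul, mul_left_comm, mul_assoc]

theorem mul_right (hζ : IsPrimitiveRootSystem p ζ) (ha : HasPrimePowRoots p L a)
    (hb : HasPrimePowRoots p L b) (hx : IsKummerExponent ζ σ a x)
    (hx' : IsKummerExponent ζ σ b x') : IsKummerExponent ζ σ (a * b) (x + x') := by
  intro n z hz
  obtain ⟨⟨y, hy⟩, ⟨y', hy'⟩⟩ := ha n, hb n
  have hyy' : (y * y') ^ p ^ n = algebraMap F L (a * b : Fˣ) := by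
    rw [mul_pow, hy, hy', Units.val_mul, map_mul]
  obtain ⟨u, -, hu⟩ := exists_pow_eq_one_and_forall_root_apply_eq (hζ.isPrimitiveRoot n) hyy' σ
  suffices algebraMap F L u = algebraMap F L (padicPow ζ (x + x') n) by rw [hu z hz, this]
  refine mul_right_cancel₀ (ne_zero_of_pow_eq_algebraMap_unit NeZero.out hyy') ?_
  rw [← hu _ hyy', map_mul, hx n y hy, hx' n y' hy', hζ.padicPow_add, map_mul, mul_mul_mul_comm]

end IsKummerExponent

variable {Δ : Subgroup Fˣ}

/-- The Kummer pairing of `Gal(L/F)` with `Δ`, valued in `ℤ_p` through the identification of the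
Tate module `T_p(μ)` with `ℤ_p` given by `ζ`. -/
noncomputable def kummerPairing (hζ : IsPrimitiveRootSystem p ζ)
    (hΔ : ∀ a : Δ, HasPrimePowRoots p L (a : Fˣ)) : Gal(L/F) →* Δ →* Multiplicative ℤ_[p] :=
  have spec σ a := (exists_isKummerExponent hζ (hΔ a) σ).choose_spec
  .mk' (fun σ ↦ .mk' (fun a ↦ .ofAdd (exists_isKummerExponent hζ (hΔ a) σ).choose) fun a b ↦
      (spec σ (a * b)).unique hζ (hΔ _) ((spec σ a).mul_right hζ (hΔ a) (hΔ b) (spec σ b)))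
    fun σ τ ↦ MonoidHom.ext fun a ↦
      (spec (σ * τ) a).unique hζ (hΔ a) ((spec σ a).mul_left hζ (spec τ a))

/-- The set `Δ^{1/p^∞}` of all `p`-power roots in `L` of elements of `Δ`. -/
def primePowRoots (p : ℕ) (Δ : Subgroup Fˣ) (L : Type*) [Field L] [Algebra F L] : Set L :=
  {x | ∃ δ : Δ, ∃ n : ℕ, x ^ p ^ n = algebraMap F L ((δ : Fˣ) : F)}

section Pairing

variable (hζ : IsPrimitiveRootSystem p ζ) (hΔ : ∀ a : Δ, HasPrimePowRoots p L (a : Fˣ))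

theorem isKummerExponent_kummerPairing (σ : Gal(L/F)) (a : Δ) :
    IsKummerExponent ζ σ a (kummerPairing hζ hΔ σ a).toAdd :=
  (exists_isKummerExponent hζ (hΔ a) σ).choose_spec

theorem continuous_kummerPairing_apply [Algebra.IsIntegral F L] (a : Δ) :
    Continuous fun σ : Gal(L/F) ↦ kummerPairing hζ hΔ σ a := by
  refine continuous_of_eventually_toZModPow_eq_zero
    ((MonoidHom.eval a).comp (kummerPairing hζ hΔ)) fun n ↦ ?_
  obtain ⟨y, hy⟩ := hΔ a n
  filter_upwards [(stabilizer_isOpen_of_isIntegral (K := F) y).mem_nhds (one_mem _)] with σ hσ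
  rw [← map_zero (PadicInt.toZModPow n), ← hζ.padicPow_eq_padicPow_iff]
  exact (isKummerExponent_kummerPairing hζ hΔ σ a).padicPow_eq (.one ζ a) hy hσ

theorem apply_eq_self_of_kummerPairing_eq_one {σ : Gal(L/F)} (hσ : kummerPairing hζ hΔ σ = 1)
    {y : L} (hy : y ∈ primePowRoots p Δ L) : σ y = y := by
  obtain ⟨a, n, hy⟩ := hy
  have hx := isKummerExponent_kummerPairing hζ hΔ σ a
  rw [hσ] at hx
  exact (hx n y hy).trans (IsKummerExponent.one ζ a n y hy).symm

end Pairing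

theorem isGalois_of_adjoin_eq_top {S : Set L} (hS : adjoin F S = ⊤)
    (h : ∀ x ∈ S, ∃ f : F[X], f.Separable ∧ aeval x f = 0 ∧ (f.map (algebraMap F L)).Splits) :
    IsGalois F L := by
  choose! f hsep hroot hsplit using h
  have hminpoly x (hx : x ∈ S) : minpoly F x ∣ f x := minpoly.dvd F x (hroot x hx)
  have hle : adjoin F S ≤ separableClosure F L :=
    adjoin_le_iff.2 fun x hx ↦ mem_separableClosure_iff.2 ((hsep x hx).of_dvd (hminpoly x hx))
  have hseparable : Algebra.IsSeparable F L :=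
    (separableClosure.eq_top_iff F L).1 (top_le_iff.1 (hS.ge.trans hle))
  have hnormal : Normal F L := normal_iff.2 fun x ↦ by
    refine ⟨(hseparable.isSeparable F x).isIntegral,
      splits_of_mem_adjoin F L (S := S) (fun y hy ↦ ?_) (hS.ge mem_top)⟩
    exact ⟨(hseparable.isSeparable F y).isIntegral, (hsplit y hy).of_dvd
      (map_ne_zero (hsep y hy).ne_zero) (map_dvd (algebraMap F L) (hminpoly y hy))⟩
  exact isGalois_iff.2 ⟨hseparable, hnormal⟩

theorem isGalois_of_adjoin_primePowRoots_eq_top (hζ : ∀ n, IsPrimitiveRoot (ζ n) (p ^ n))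
    (hL : adjoin F (primePowRoots p Δ L) = ⊤) : IsGalois F L := by
  refine isGalois_of_adjoin_eq_top hL ?_
  rintro y ⟨a, n, hy⟩
  have hN : ((p ^ n : ℕ) : F) ≠ 0 := (hζ n).neZero'.out
  refine ⟨X ^ p ^ n - C ((a : Fˣ) : F), separable_X_pow_sub_C _ hN (Units.ne_zero _), ?_, ?_⟩
  · rw [map_sub, aeval_X_pow, aeval_C, hy, sub_self]
  · rw [Polynomial.map_sub, Polynomial.map_pow, map_X, map_C]
    exact X_pow_sub_C_splits_of_isPrimitiveRoot
      ((hζ n).map_of_injective (algebraMap F L).injective) hy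

theorem exists_continuousMulEquiv_of_adjoin_primePowRoots_eq_top (hζ : IsPrimitiveRootSystem p ζ)
    (hΔ : ∀ a : Δ, HasPrimePowRoots p L (a : Fˣ)) (hL : adjoin F (primePowRoots p Δ L) = ⊤)
    {r : ℕ} (hr : Module.rank ℤ (Additive Δ) = r) :
    ∃ d ≤ r, Nonempty (Gal(L/F) ≃ₜ* Multiplicative (Fin d → ℤ_[p])) := by
  have := isGalois_of_adjoin_primePowRoots_eq_top hζ.isPrimitiveRoot hL
  obtain ⟨v, hv⟩ := exists_forall_monoidHom_eq_one_of_rank_eq hr (Multiplicative ℤ_[p])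
  let f : Gal(L/F) →* Multiplicative (Fin r → ℤ_[p]) :=
    .mk' (fun σ ↦ .ofAdd fun i ↦ (kummerPairing hζ hΔ σ (v i)).toAdd) fun σ τ ↦ by
      rw [map_mul]
      rfl
  refine exists_continuousMulEquiv_padicInt_pi_of_injective f ?_ ?_
  · exact continuous_ofAdd.comp (continuous_pi fun i ↦
      continuous_toAdd.comp (continuous_kummerPairing_apply hζ hΔ (v i)))
  · refine (injective_iff_map_eq_one f).2 fun σ hσ ↦ ?_
    have hpair : kummerPairing hζ hΔ σ = 1 := hv _ fun i ↦ congrFun hσ i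
    refine AlgEquiv.coe_toAlgHom_injective
      (AlgHom.ext_of_adjoin_eq_top (adjoin_eq_top_iff.1 hL) fun y hy ↦ ?_)
    exact apply_eq_self_of_kummerPairing_eq_one hζ hΔ hpair hy

end Kummer

section Adjoin

open IntermediateField

variable {F K : Type*} [Field F] [Field K] [Algebra F K]

theorem adjoin_preimage_coe_adjoin_eq_top (S : Set K) :
    adjoin F ((↑) ⁻¹' S : Set (adjoin F S)) = ⊤ := by
  refine lift_injective _ ?_
  rw [lift_adjoin, IntermediateField.lift_top]
  exact congrArg (adjoin F)
    (Set.image_preimage_eq_of_subset ((subset_adjoin F S).trans Subtype.range_coe.ge))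

variable {p : ℕ} {Δ : Subgroup Fˣ}

theorem adjoin_primePowRoots_eq_top :
    adjoin F (primePowRoots p Δ (adjoin F (primePowRoots p Δ K))) = ⊤ := by
  convert adjoin_preimage_coe_adjoin_eq_top (primePowRoots p Δ K) using 2
  ext x
  exact exists₂_congr fun a n ↦ Subtype.ext_iff

theorem hasPrimePowRoots_adjoin_primePowRoots [IsSepClosed K] [NeZero (p : K)] (a : Δ) :
    HasPrimePowRoots p (adjoin F (primePowRoots p Δ K)) (a : Fˣ) := fun n ↦ by
  have : NeZero ((p ^ n : ℕ) : K) := ⟨by rw [Nat.cast_pow]; exact pow_ne_zero n NeZero.out⟩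
  obtain ⟨y, hy⟩ := IsSepClosed.exists_pow_nat_eq (algebraMap F K (a : Fˣ)) (p ^ n)
  exact ⟨⟨y, subset_adjoin F _ ⟨a, n, hy⟩⟩, Subtype.ext hy⟩

theorem exists_isPrimitiveRootSystem_of_forall_mem_range [Fact p.Prime] [IsSepClosed K]
    [NeZero (p : K)] (hroots : ∀ (ζ : K) (n : ℕ), ζ ^ p ^ n = 1 → ζ ∈ (algebraMap F K).range) :
    ∃ ζ : ℕ → F, IsPrimitiveRootSystem p ζ := by
  obtain ⟨z, hz⟩ := exists_isPrimitiveRootSystem p K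
  choose ζ hζ using fun n ↦ hroots (z n) n (hz.isPrimitiveRoot n).pow_eq_one
  have hinj := (algebraMap F K).injective
  exact ⟨ζ, fun n ↦ .of_map_of_injective (f := algebraMap F K) (hζ n ▸ hz.isPrimitiveRoot n) hinj,
    fun n ↦ hinj (by rw [map_pow, hζ, hζ, hz.pow_succ_eq])⟩

theorem natCast_ne_zero_of_ringChar_ne {R : Type*} [NonAssocSemiring R] [Nontrivial R] {p : ℕ}
    (hp : p.Prime) (h : ringChar R ≠ p) : (p : R) ≠ 0 := fun hpR ↦
  ((Nat.dvd_prime hp).1 (ringChar.dvd hpR)).elim CharP.ringChar_ne_one h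

theorem stmt1_general (p : ℕ) [Fact p.Prime] {F K : Type*} [Field F] [Field K] [Algebra F K]
    [IsSepClosed K] (hchar : ringChar F ≠ p)
    (hroots : ∀ (ζ : K) (n : ℕ), ζ ^ p ^ n = 1 → ζ ∈ (algebraMap F K).range)
    (Δ : Subgroup Fˣ) {d₀ : ℕ} (hrank : Module.rank ℤ (Additive Δ) = d₀) :
    ∃ d ≤ d₀, Nonempty
      (Gal(adjoin F (primePowRoots p Δ K)/F) ≃ₜ* Multiplicative (Fin d → ℤ_[p])) := by
  have hpF : (p : F) ≠ 0 := natCast_ne_zero_of_ringChar_ne Fact.out hchar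
  have : NeZero (p : K) := ⟨by rwa [← map_natCast (algebraMap F K), _root_.map_ne_zero]⟩
  obtain ⟨ζ, hζ⟩ := exists_isPrimitiveRootSystem_of_forall_mem_range hroots
  exact exists_continuousMulEquiv_of_adjoin_primePowRoots_eq_top hζ
    hasPrimePowRoots_adjoin_primePowRoots adjoin_primePowRoots_eq_top hrank

end Adjoin

/-- Let `p` be a prime and `F` a perfect field of characteristic `≠ p`
containing all `p`-power roots of unity, and let `Δ` be a finitely generated subgroup of
`Fˣ` whose free quotient `Δ/Δ_tor` has rank `d₀`.  Then `Gal(F(Δ^{1/p^∞})/F)` is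
topologically isomorphic to `ℤ_p^d` for some `d ≤ d₀`. -/
theorem stmt1 (p : ℕ) [Fact p.Prime] (F : Type) [Field F] [PerfectField F]
    (hchar : ringChar F ≠ p)
    (hroots : ∀ (ζ : AlgebraicClosure F) (n : ℕ), ζ ^ p ^ n = 1 →
      ζ ∈ (algebraMap F (AlgebraicClosure F)).range)
    (Δ : Subgroup Fˣ) (hfg : Group.FG ↥Δ)
    (d₀ : ℕ) (hrank : Nonempty ((↥Δ ⧸ CommGroup.torsion ↥Δ) ≃* Multiplicative (Fin d₀ → ℤ)))
    (E : IntermediateField F (AlgebraicClosure F))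
    (hE : E = IntermediateField.adjoin F
      {x : AlgebraicClosure F | ∃ δ : ↥Δ, ∃ n : ℕ,
        x ^ p ^ n = algebraMap F (AlgebraicClosure F) ((δ : Fˣ) : F)}) :
    ∃ d : ℕ, d ≤ d₀ ∧
      ∃ φ : (↥E ≃ₐ[F] ↥E) ≃* Multiplicative (Fin d → ℤ_[p]),
        Continuous φ ∧ Continuous φ.symm := by
  subst hE
  obtain ⟨e⟩ := hrank
  obtain ⟨d, hd, ⟨φ⟩⟩ :=
    stmt1_general p hchar hroots Δ (rank_additive_eq_of_quotient_torsion e)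
  exact ⟨d, hd, φ.toMulEquiv, φ.continuous, φ.symm.continuous⟩
end

section
/- Let G be a group, E a field, and V, V' finite dimensional semisimple E-representations of G. Assume char E = 0 or char E > max{dim V, dim V'}. If Tr(σ | V) = Tr(σ | V') for all σ ∈ G, then V and V' are isomorphic as representations. -/
/-!
Let `R` be an algebra over the field `E` and `S` a simple `R`-module. Inside the semisimple module
`M × N` the `S`-isotypic component has a fully invariant complement, so the projection onto it
commutes with all `R`-endomorphisms and, by the density theorem, is the action of some `r : R`.
This one `r` acts on `M` and on `N` as the projection onto the respective `S`-isotypic components,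
hence its traces there are the dimensions of these components, read in `E`. The assumption on the
characteristic allows recovering the dimensions from their images in `E`. Thus modules with the same
traces have the same simple submodules, and splitting off a common one lowers the dimension.
-/

open Module
open scoped MonoidAlgebra

section Isotypic

variable {R M N S : Type*} [Ring R] [AddCommGroup M] [Module R M] [AddCommGroup N] [Module R N]
  [AddCommGroup S] [Module R S]

theorem isSemisimpleModule_prod [IsSemisimpleModule R M] [IsSemisimpleModule R N] :
    IsSemisimpleModule R (M × N) := by
  have h := IsSemisimpleModule.sup (.range (LinearMap.inl R M N)) (.range (LinearMap.inr R M N))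
  rw [LinearMap.sup_range_inl_inr] at h
  exact .congr Submodule.topEquiv.symm

theorem comap_isotypicComponent [IsSemisimpleModule R M] [IsSimpleModule R S] {f : M →ₗ[R] N}
    (hf : Function.Injective f) :
    (isotypicComponent R N S).comap f = isotypicComponent R M S := by
  refine le_antisymm (le_isotypicComponent_iff.mpr ?_) (f.le_comap_isotypicComponent S)
  exact (IsIsotypicOfType.isotypicComponent R N S).of_injective
    (f.restrict fun _ ↦ Submodule.mem_comap.mp) fun x y hxy ↦
      Subtype.ext (hf (congr_arg Subtype.val hxy))

theorem exists_linearEquiv_of_isotypicComponent_ne_bot (h : isotypicComponent R M S ≠ ⊥) :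
    ∃ T : Submodule R M, Nonempty (T ≃ₗ[R] S) := by
  contrapose! h
  simp [isotypicComponent, h]

theorem exists_isFullyInvariant_isCompl [IsSemisimpleModule R M] {P : Submodule R M}
    (hP : P.IsFullyInvariant) : ∃ Q : Submodule R M, Q.IsFullyInvariant ∧ IsCompl P Q := by
  have : ComplementedLattice (fullyInvariantSubmodule R M) :=
    OrderIso.setIsotypicComponents.complementedLattice
  obtain ⟨Q, hPQ⟩ := exists_isCompl (⟨P, hP⟩ : fullyInvariantSubmodule R M)
  refine ⟨Q, Q.2, disjoint_iff.mpr ?_, codisjoint_iff.mpr ?_⟩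
  · exact congr_arg Subtype.val hPQ.inf_eq_bot
  · exact congr_arg Subtype.val hPQ.sup_eq_top

theorem exists_isProj_smul_of_isFullyInvariant [IsSemisimpleModule R M]
    [Module.Finite (End R M) M] {P : Submodule R M} (hP : P.IsFullyInvariant) :
    ∃ r : R, LinearMap.IsProj P (toAddMonoidEnd R M r) := by
  obtain ⟨Q, hQ, hPQ⟩ := exists_isFullyInvariant_isCompl hP
  have hcomm (f : End R M) : Commute (P.projection Q hPQ) f := by
    rw [LinearMap.IsIdempotentElem.commute_iff (Submodule.isIdempotentElem_projection hPQ),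
      Submodule.range_projection, Submodule.ker_projection]
    exact ⟨hP f, hQ f⟩
  let p : End (End R M) M :=
    { (P.projection Q hPQ).toAddMonoidHom with
      map_smul' f x := LinearMap.congr_fun (hcomm f).eq x }
  obtain ⟨r, hr⟩ := Module.Finite.toModuleEnd_moduleEnd_surjective (R := R) p
  have hr (x : M) : toAddMonoidEnd R M r x = P.projection Q hPQ x := LinearMap.congr_fun hr x
  exact ⟨r, fun x ↦ hr x ▸ Submodule.projection_apply_mem hPQ x,
    fun x hx ↦ (hr x).trans (Submodule.projection_apply_left hPQ ⟨x, hx⟩)⟩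

theorem isProj_smul_comap {f : M →ₗ[R] N} (hf : Function.Injective f) {P : Submodule R N} {r : R}
    (hP : LinearMap.IsProj P (toAddMonoidEnd R N r)) :
    LinearMap.IsProj (P.comap f) (toAddMonoidEnd R M r) where
  map_mem x := Submodule.mem_comap.mpr <| (map_smul f r x).symm ▸ hP.map_mem (f x)
  map_id x hx := hf <| (map_smul f r x).trans (hP.map_id (f x) hx)

variable (R M N S) in
theorem exists_isProj_smul_isotypicComponent [IsSemisimpleModule R M] [IsSemisimpleModule R N]
    [Module.Finite (End R (M × N)) (M × N)] [IsSimpleModule R S] :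
    ∃ r : R, LinearMap.IsProj (isotypicComponent R M S) (toAddMonoidEnd R M r) ∧
      LinearMap.IsProj (isotypicComponent R N S) (toAddMonoidEnd R N r) := by
  have : IsSemisimpleModule R (M × N) := isSemisimpleModule_prod
  obtain ⟨r, hr⟩ := exists_isProj_smul_of_isFullyInvariant
    (Submodule.IsFullyInvariant.isotypicComponent R (M × N) S)
  refine ⟨r, ?_, ?_⟩
  · rw [← comap_isotypicComponent (LinearMap.inl_injective (R := R) (M₂ := N))]
    exact isProj_smul_comap LinearMap.inl_injective hr
  · rw [← comap_isotypicComponent (LinearMap.inr_injective (R := R) (M := M))]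
    exact isProj_smul_comap LinearMap.inr_injective hr

end Isotypic

section ModuleCharacter

variable (E R M N : Type*) [CommRing E] [Ring R] [Algebra E R]
  [AddCommGroup M] [Module E M] [Module R M] [IsScalarTower E R M]
  [AddCommGroup N] [Module E N] [Module R N] [IsScalarTower E R N]

/-- The character of a module `M` over an `E`-algebra `R`: the linear form on `R` sending `r` to the
trace over `E` of the action of `r` on `M`. It is the analogue, for modules over an algebra, of the
character of a representation. -/
noncomputable def moduleCharacter : R →ₗ[E] E :=
  LinearMap.trace E M ∘ₗ (Algebra.lsmul E E M).toLinearMap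

variable {E R M N}

theorem moduleCharacter_apply (r : R) :
    moduleCharacter E R M r = LinearMap.trace E M (Algebra.lsmul E E M r) :=
  rfl

theorem moduleCharacter_one [Module.Free E M] [Module.Finite E M] :
    moduleCharacter E R M 1 = finrank E M := by
  rw [moduleCharacter_apply, map_one, LinearMap.trace_one]

theorem moduleCharacter_congr (e : M ≃ₗ[R] N) :
    moduleCharacter E R M = moduleCharacter E R N := by
  ext r
  have hconj : (e.restrictScalars E).conj (Algebra.lsmul E E M r) = Algebra.lsmul E E N r := by
    ext x
    simp [LinearEquiv.conj_apply]
  rw [moduleCharacter_apply, moduleCharacter_apply, ← hconj, LinearMap.trace_conj']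

theorem moduleCharacter_prod [Module.Free E M] [Module.Finite E M] [Module.Free E N]
    [Module.Finite E N] :
    moduleCharacter E R (M × N) = moduleCharacter E R M + moduleCharacter E R N := by
  ext r
  exact LinearMap.trace_prodMap' (Algebra.lsmul E E M r) (Algebra.lsmul E E N r)

end ModuleCharacter

section BrauerNesbitt

variable {E R M N : Type*} [Field E] [Ring R] [Algebra E R]
  [AddCommGroup M] [Module E M] [Module R M] [IsScalarTower E R M] [FiniteDimensional E M]
  [AddCommGroup N] [Module E N] [Module R N] [IsScalarTower E R N] [FiniteDimensional E N]

theorem finiteDimensional_submodule (P : Submodule R M) : FiniteDimensional E P :=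
  inferInstanceAs (FiniteDimensional E (P.restrictScalars E))

theorem moduleCharacter_apply_of_isProj {P : Submodule R M} {r : R}
    (hr : LinearMap.IsProj P (toAddMonoidEnd R M r)) :
    moduleCharacter E R M r = finrank E P :=
  LinearMap.IsProj.trace (p := P.restrictScalars E) ⟨hr.map_mem, hr.map_id⟩

theorem moduleCharacter_eq_add_of_isCompl {P Q : Submodule R M} (h : IsCompl P Q) :
    moduleCharacter E R M = moduleCharacter E R P + moduleCharacter E R Q := by
  have := finiteDimensional_submodule (E := E) P
  have := finiteDimensional_submodule (E := E) Q
  rw [← moduleCharacter_congr (Submodule.prodEquivOfIsCompl P Q h), moduleCharacter_prod]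

theorem finrank_lt_of_isCompl {P Q : Submodule R M} (h : IsCompl P Q) (hP : P ≠ ⊥) :
    finrank E Q < finrank E M := by
  refine Submodule.finrank_lt (s := Q.restrictScalars E) ?_
  rw [ne_eq, Submodule.restrictScalars_eq_top_iff]
  rintro rfl
  exact hP (eq_bot_of_isCompl_top h)

theorem injOn_natCast_Iic_of_ringChar {d : ℕ} (h : ringChar E = 0 ∨ d < ringChar E) :
    Set.InjOn (Nat.cast : ℕ → E) (Set.Iic d) := by
  rcases h with h | h
  · have : CharZero E := (CharP.ringChar_zero_iff_CharZero E).mp h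
    exact Nat.cast_injective.injOn
  · exact (CharP.natCast_injOn_Iio E (ringChar E)).mono fun _ hk ↦ lt_of_le_of_lt hk h

variable {d : ℕ}

theorem finrank_eq_of_moduleCharacter_eq (hd : Set.InjOn (Nat.cast : ℕ → E) (Set.Iic d))
    (hM : finrank E M ≤ d) (hN : finrank E N ≤ d)
    (hχ : moduleCharacter E R M = moduleCharacter E R N) : finrank E M = finrank E N :=
  hd hM hN <| by rw [← moduleCharacter_one (R := R), hχ, moduleCharacter_one]

variable [IsSemisimpleModule R M] [IsSemisimpleModule R N]

theorem finrank_isotypicComponent_eq_of_moduleCharacter_eq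
    (hd : Set.InjOn (Nat.cast : ℕ → E) (Set.Iic d)) (hM : finrank E M ≤ d) (hN : finrank E N ≤ d)
    (hχ : moduleCharacter E R M = moduleCharacter E R N)
    (S : Type*) [AddCommGroup S] [Module R S] [IsSimpleModule R S] :
    finrank E (isotypicComponent R M S) = finrank E (isotypicComponent R N S) := by
  have := Module.Finite.of_restrictScalars_finite E (End R (M × N)) (M × N)
  obtain ⟨r, hrM, hrN⟩ := exists_isProj_smul_isotypicComponent R M N S
  apply hd
  · exact (Submodule.finrank_le ((isotypicComponent R M S).restrictScalars E)).trans hM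
  · exact (Submodule.finrank_le ((isotypicComponent R N S).restrictScalars E)).trans hN
  · rw [← moduleCharacter_apply_of_isProj hrM, hχ, moduleCharacter_apply_of_isProj hrN]

theorem exists_submodule_linearEquiv_of_moduleCharacter_eq
    (hd : Set.InjOn (Nat.cast : ℕ → E) (Set.Iic d)) (hM : finrank E M ≤ d) (hN : finrank E N ≤ d)
    (hχ : moduleCharacter E R M = moduleCharacter E R N)
    (S : Submodule R M) [IsSimpleModule R S] : ∃ T : Submodule R N, Nonempty (T ≃ₗ[R] S) := by
  have := finiteDimensional_submodule (E := E) (isotypicComponent R M S)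
  have := finiteDimensional_submodule (E := E) (isotypicComponent R N S)
  apply exists_linearEquiv_of_isotypicComponent_ne_bot
  rw [ne_eq, ← Submodule.subsingleton_iff_eq_bot, ← finrank_zero_iff (R := E),
    ← finrank_isotypicComponent_eq_of_moduleCharacter_eq hd hM hN hχ S, finrank_zero_iff,
    Submodule.subsingleton_iff_eq_bot]
  exact (bot_lt_isotypicComponent S).ne'

theorem nonempty_linearEquiv_of_moduleCharacter_eq
    (hd : Set.InjOn (Nat.cast : ℕ → E) (Set.Iic d)) (hM : finrank E M ≤ d) (hN : finrank E N ≤ d)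
    (hχ : moduleCharacter E R M = moduleCharacter E R N) : Nonempty (M ≃ₗ[R] N) := by
  induction hn : finrank E M using Nat.strong_induction_on generalizing M N with
  | _ n ih =>
  subst hn
  rcases subsingleton_or_nontrivial M with hM₀ | hM₀
  · have hN₀ : finrank E N = 0 := by
      rw [← finrank_eq_of_moduleCharacter_eq hd hM hN hχ, finrank_zero_of_subsingleton]
    have : Subsingleton N := finrank_zero_iff.mp hN₀
    exact ⟨0⟩
  obtain ⟨S, hS⟩ := IsSemisimpleModule.exists_simple_submodule R M
  obtain ⟨T, ⟨e⟩⟩ := exists_submodule_linearEquiv_of_moduleCharacter_eq hd hM hN hχ S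
  obtain ⟨U, hSU⟩ := exists_isCompl S
  obtain ⟨W, hTW⟩ := exists_isCompl T
  have := finiteDimensional_submodule (E := E) U
  have := finiteDimensional_submodule (E := E) W
  have hU : finrank E U < finrank E M :=
    finrank_lt_of_isCompl hSU (isSimpleModule_iff_isAtom.mp hS).ne_bot
  have hW : finrank E W ≤ finrank E N := Submodule.finrank_le (W.restrictScalars E)
  have hχUW : moduleCharacter E R U = moduleCharacter E R W := by
    rw [moduleCharacter_eq_add_of_isCompl hSU, moduleCharacter_eq_add_of_isCompl hTW,
      moduleCharacter_congr e] at hχ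
    exact add_left_cancel hχ
  obtain ⟨g⟩ := ih _ hU (hU.le.trans hM) (hW.trans hN) hχUW rfl
  exact ⟨(Submodule.prodEquivOfIsCompl S U hSU).symm ≪≫ₗ e.symm.prodCongr g ≪≫ₗ
    Submodule.prodEquivOfIsCompl T W hTW⟩

end BrauerNesbitt

section Representation

variable {E G V V' : Type*} [Field E] [Monoid G] [AddCommGroup V] [Module E V]
  [AddCommGroup V'] [Module E V'] {ρ : Representation E G V} {ρ' : Representation E G V'}

theorem moduleCharacter_asModule_single (ρ : Representation E G V) (g : G) :
    moduleCharacter E E[G] ρ.asModule (.single g 1) = ρ.character g := by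
  have hconj : ρ.asModuleEquiv.conj
      (Algebra.lsmul E E ρ.asModule (MonoidAlgebra.single g (1 : E))) = ρ g := by
    ext v
    rw [LinearEquiv.conj_apply_apply, Algebra.lsmul_coe, ρ.asModuleEquiv_map_smul,
      ρ.asAlgebraHom_single_one, LinearEquiv.apply_symm_apply]
  rw [moduleCharacter_apply, ← LinearMap.trace_conj' _ ρ.asModuleEquiv, hconj,
    Representation.character]

theorem moduleCharacter_asModule_eq_of_character_eq (h : ρ.character = ρ'.character) :
    moduleCharacter E E[G] ρ.asModule = moduleCharacter E E[G] ρ'.asModule := by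
  ext g
  simp [moduleCharacter_asModule_single, h]

theorem nonempty_equiv_of_linearEquiv_asModule (e : ρ.asModule ≃ₗ[E[G]] ρ'.asModule) :
    Nonempty (ρ.Equiv ρ') :=
  let f : ρ.IntertwiningMap ρ' :=
    (Representation.IntertwiningMap.equivLinearMapAsModule ρ ρ').symm e.toLinearMap
  ⟨f.ofBijective e.bijective⟩

theorem stmt6_general [FiniteDimensional E V] [FiniteDimensional E V']
    (hss : IsSemisimpleModule E[G] ρ.asModule) (hss' : IsSemisimpleModule E[G] ρ'.asModule)
    (hchar : ringChar E = 0 ∨ max (finrank E V) (finrank E V') < ringChar E)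
    (htr : ρ.character = ρ'.character) : Nonempty (ρ.Equiv ρ') := by
  obtain ⟨e⟩ := nonempty_linearEquiv_of_moduleCharacter_eq (injOn_natCast_Iic_of_ringChar hchar)
    (ρ.asModuleEquiv.finrank_eq.trans_le (le_max_left _ _))
    (ρ'.asModuleEquiv.finrank_eq.trans_le (le_max_right _ _))
    (moduleCharacter_asModule_eq_of_character_eq htr)
  exact nonempty_equiv_of_linearEquiv_asModule e

end Representation

/-- **trace version of Brauer–Nesbitt.** Let `G` be a group, `E` a field
and `V, V'` finite dimensional semisimple `E`-representations of `G` with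
`char E = 0` or `char E > max (dim V) (dim V')`.  If the traces agree,
`Tr(σ | V) = Tr(σ | V')` for all `σ ∈ G`, then `V ≅ V'` as representations. -/
theorem stmt6 (G : Type) [Group G] (E : Type) [Field E]
    (V : Type) [AddCommGroup V] [Module E V] [FiniteDimensional E V]
    (V' : Type) [AddCommGroup V'] [Module E V'] [FiniteDimensional E V']
    (ρ : Representation E G V) (ρ' : Representation E G V')
    (hss : IsSemisimpleModule (MonoidAlgebra E G) ρ.asModule)
    (hss' : IsSemisimpleModule (MonoidAlgebra E G) ρ'.asModule)
    (hchar : ringChar E = 0 ∨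
      max (Module.finrank E V) (Module.finrank E V') < ringChar E)
    (htr : ∀ σ : G, LinearMap.trace E V (ρ σ) = LinearMap.trace E V' (ρ' σ)) :
    ∃ e : V ≃ₗ[E] V', ∀ (σ : G) (v : V), e (ρ σ v) = ρ' σ (e v) := by
  obtain ⟨e⟩ := stmt6_general hss hss' hchar (funext htr)
  exact ⟨e.toLinearEquiv, fun σ v ↦ LinearMap.congr_fun (e.isIntertwining' σ) v⟩
end

section
/- For every positive integer d there is a constant δ_d, depending only on d, such that for every prime p, the composite field Q_p(d)_ab of all abelian extensions of Q_p of degree ≤ d satisfies [Q_p(d)_ab : Q_p] ≤ δ_d. -/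
/-!
An abelian extension of `ℚ_p` of degree at most `d` has Galois group of exponent dividing
`n = d!`, so by Kummer theory it is contained in the extension of `K = ℚ_p(ζ_n)` generated by all
`n`-th roots of elements of `K`. If finitely many elements `S` generate `Kˣ` modulo `n`-th powers,
this extension has degree at most `n ^ #S` over `K`. By Hensel's lemma, every element of
`1 + n² 𝓂` is an `n`-th power, where `𝓂` is the maximal ideal of `𝒪_K`, so a uniformizer together
with lifts of generators of the finite group `(𝒪_K ⧸ n² 𝓂)ˣ` will do. If `p > d`, then `n` is a
unit, this group is the cyclic group of units of the residue field, and two elements suffice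
whatever `p` is.
-/

section Kummer

open IntermediateField

theorem exponent_dvd_factorial_of_finrank_le {F L : Type*} [Field F] [Field L] [Algebra F L]
    [FiniteDimensional F L] [IsGalois F L] {d : ℕ} (hd : Module.finrank F L ≤ d) :
    Monoid.exponent Gal(L/F) ∣ d.factorial := by
  refine Group.exponent_dvd_nat_card.trans (Nat.dvd_factorial Nat.card_pos ?_)
  rwa [IsGalois.card_aut_eq_finrank]

/-- The extension of `K` generated by the `n`-th roots in `Ω` of the elements of `K`. When `K`
contains the `n`-th roots of unity, it contains the abelian extensions of `K` in `Ω` of exponent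
dividing `n`, so a bound on it bounds the compositum of all of them. -/
def kummerExtension (K Ω : Type*) [Field K] [Field Ω] [Algebra K Ω] (n : ℕ) :
    IntermediateField K Ω :=
  adjoin K {x | ∃ a : K, x ^ n = algebraMap K Ω a}

-- The Lagrange resolvent `∑ σ, χ(σ)⁻¹ σ(x)` is nonzero for some `x` by independence of characters.
theorem exists_ne_zero_forall_apply_eq_smul {F Ω : Type*} [Field F] [Field Ω] [Algebra F Ω]
    (K L : IntermediateField F Ω) [FiniteDimensional F L] [Normal F L] (χ : Gal(L/F) →* Kˣ) :
    ∃ a : Ω, a ≠ 0 ∧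
      ∀ τ : Gal(Ω/K), τ a = χ (restrictRestrictAlgEquivMapHom F L K Ω τ) • a := by
  let character (σ : Gal(L/F)) : L →* Ω := (algebraMap L Ω).toMonoidHom.comp σ
  have character_injective : Function.Injective character := fun σ τ h ↦
    AlgEquiv.ext fun x ↦ (algebraMap L Ω).injective (DFunLike.congr_fun h x)
  obtain ⟨x, hx⟩ : ∃ x : L, ∑ σ : Gal(L/F), χ σ⁻¹ • (σ x : Ω) ≠ 0 := by
    by_contra! h
    have := Fintype.linearIndependent_iff.mp
      ((linearIndependent_monoidHom L Ω).comp character character_injective)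
      (fun σ ↦ ((χ σ⁻¹ : K) : Ω)) (funext fun x ↦ by
        simpa [character, Units.smul_def, Algebra.smul_def, Finset.sum_apply] using h x) 1
    simp at this
  refine ⟨_, hx, fun τ ↦ ?_⟩
  set ρ := restrictRestrictAlgEquivMapHom F L K Ω
  calc τ (∑ σ, χ σ⁻¹ • (σ x : Ω)) = ∑ σ, χ σ⁻¹ • ((ρ τ * σ) x : Ω) := by
        simp [ρ, Units.smul_def]
    _ = ∑ σ, χ (σ⁻¹ * ρ τ) • (σ x : Ω) :=
        Fintype.sum_equiv (Equiv.mulLeft (ρ τ)) _ _ fun σ ↦ by simp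
    _ = χ (ρ τ) • ∑ σ, χ σ⁻¹ • (σ x : Ω) := by
        simp [Finset.smul_sum, smul_smul, mul_comm]

theorem le_kummerExtension {F Ω : Type*} [Field F] [Field Ω] [Algebra F Ω] [IsGalois F Ω]
    {n : ℕ} [NeZero n] (K L : IntermediateField F Ω) [HasEnoughRootsOfUnity K n]
    [FiniteDimensional F L] [IsAbelianGalois F L] (hn : Monoid.exponent Gal(L/F) ∣ n) :
    L ≤ (kummerExtension K Ω n).restrictScalars F := by
  open scoped IsMulCommutative in
  have : HasEnoughRootsOfUnity K (Monoid.exponent Gal(L/F)) := .of_dvd K hn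
  intro x hx
  suffices h : x ∈ fixedField (kummerExtension K Ω n).fixingSubgroup by
    rwa [InfiniteGalois.fixedField_fixingSubgroup] at h
  refine (mem_fixedField_iff _ _).mpr fun σ hσ ↦ ?_
  set ρ := restrictRestrictAlgEquivMapHom F L K Ω
  suffices h : ρ σ = 1 by
    exact (restrictRestrictAlgEquivMapHom_apply L K σ ⟨x, hx⟩).symm.trans
      congr(((($h : Gal(L/F)) ⟨x, hx⟩ : L) : Ω))
  by_contra hne
  obtain ⟨χ, hχ⟩ := CommGroup.exists_apply_ne_one_of_hasEnoughRootsOfUnity Gal(L/F) K hne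
  obtain ⟨a, ha0, ha⟩ := exists_ne_zero_forall_apply_eq_smul K L χ
  have pow_mem_bot : a ^ n ∈ (⊥ : IntermediateField K Ω) :=
    (InfiniteGalois.mem_bot_iff_fixed _).mpr fun τ ↦ by
      rw [map_pow, ha, smul_pow, ← map_pow, Monoid.exponent_dvd_iff_forall_pow_eq_one.mp hn,
        map_one, one_smul]
  have mem_kummer : a ∈ kummerExtension K Ω n :=
    subset_adjoin K _ ((mem_bot.mp pow_mem_bot).imp fun _ ↦ Eq.symm)
  have smul_eq : χ (ρ σ) • a = a := (ha σ).symm.trans (hσ ⟨a, mem_kummer⟩)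
  exact hχ (Units.ext (smul_left_injective K ha0 (smul_eq.trans (one_smul K a).symm)))

theorem finiteDimensional_and_finrank_le_of_le {K Ω : Type*} [Field K] [Field Ω] [Algebra K Ω]
    {E E' : IntermediateField K Ω} (h : E ≤ E') [FiniteDimensional K E'] {m : ℕ}
    (hm : Module.finrank K E' ≤ m) : FiniteDimensional K E ∧ Module.finrank K E ≤ m :=
  ⟨.of_injective (inclusion h).toLinearMap (inclusion h).injective,
    (finrank_le_of_le_right h).trans hm⟩

theorem finrank_adjoin_simple_le_of_pow_eq {K Ω : Type*} [Field K] [Field Ω] [Algebra K Ω]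
    {n : ℕ} (hn : 0 < n) {a : K} {x : Ω} (hx : x ^ n = algebraMap K Ω a) :
    FiniteDimensional K K⟮x⟯ ∧ Module.finrank K K⟮x⟯ ≤ n := by
  open Polynomial in
  have hx_int : IsIntegral K x := .of_pow hn (hx ▸ isIntegral_algebraMap)
  refine ⟨adjoin.finiteDimensional hx_int, ?_⟩
  rw [adjoin.finrank hx_int, ← natDegree_X_pow_sub_C (n := n) (r := a)]
  exact natDegree_le_of_dvd (minpoly.dvd _ _ (by simp [hx])) (X_pow_sub_C_ne_zero hn a)

theorem exists_intermediateField_hasEnoughRootsOfUnity {n : ℕ} [NeZero n] (F Ω : Type*)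
    [Field F] [Field Ω] [Algebra F Ω] [HasEnoughRootsOfUnity Ω n] :
    ∃ K : IntermediateField F Ω, FiniteDimensional F K ∧ Module.finrank F K ≤ n ∧
      HasEnoughRootsOfUnity K n := by
  obtain ⟨ζ, hζ⟩ := HasEnoughRootsOfUnity.exists_primitiveRoot Ω n
  obtain ⟨hfin, hle⟩ := finrank_adjoin_simple_le_of_pow_eq (K := F) (a := 1) (NeZero.pos n)
    (hζ.pow_eq_one.trans (map_one _).symm)
  have gen_primitive : IsPrimitiveRoot (AdjoinSimple.gen F ζ) n :=
    .of_map_of_injective (f := algebraMap F⟮ζ⟯ Ω) (by simpa using hζ) (algebraMap F⟮ζ⟯ Ω).injective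
  exact ⟨F⟮ζ⟯, hfin, hle, ⟨_, gen_primitive⟩, rootsOfUnity.isCyclic F⟮ζ⟯ n⟩

theorem exists_finrank_le_forall_exists_pow_eq {K : Type*} (Ω : Type*) [Field K] [Field Ω]
    [Algebra K Ω] [IsAlgClosed Ω] {n : ℕ} (hn : 0 < n) (S : Finset K) :
    ∃ E : IntermediateField K Ω, FiniteDimensional K E ∧ Module.finrank K E ≤ n ^ S.card ∧
      ∀ s ∈ S, ∃ x : E, x ^ n = algebraMap K E s := by
  classical
  induction S using Finset.induction_on with
  | empty => exact ⟨⊥, inferInstance, by simp, by simp⟩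
  | insert a S ha ih =>
    obtain ⟨E, _, hE, hS⟩ := ih
    obtain ⟨x, hx⟩ := IsAlgClosed.exists_pow_nat_eq (algebraMap K Ω a) hn
    obtain ⟨_, hx_le⟩ := finrank_adjoin_simple_le_of_pow_eq hn hx
    refine ⟨E ⊔ K⟮x⟯, inferInstance, ?_, Finset.forall_mem_insert _ _ _ |>.mpr ⟨?_, ?_⟩⟩
    · rw [Finset.card_insert_of_notMem ha, pow_succ]
      exact (finrank_sup_le E K⟮x⟯).trans (Nat.mul_le_mul hE hx_le)
    · exact ⟨⟨x, (le_sup_right : K⟮x⟯ ≤ E ⊔ K⟮x⟯) (mem_adjoin_simple_self K x)⟩, Subtype.ext hx⟩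
    · intro s hs
      obtain ⟨y, hy⟩ := hS s hs
      exact ⟨inclusion le_sup_left y, by rw [← map_pow, hy, AlgHom.commutes]⟩

theorem exists_pow_eq_algebraMap_of_closure_sup_range_eq_top {K E : Type*} [Field K] [Field E]
    [Algebra K E] {n : ℕ} (hn : n ≠ 0) {S : Set Kˣ}
    (hS : Subgroup.closure S ⊔ (powMonoidHom n : Kˣ →* Kˣ).range = ⊤)
    (h : ∀ s ∈ S, ∃ x : E, x ^ n = algebraMap K E s) (a : K) :
    ∃ x : E, x ^ n = algebraMap K E a := by
  rcases eq_or_ne a 0 with rfl | ha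
  · exact ⟨0, by simp [hn]⟩
  let φ : Kˣ →* Eˣ := Units.map (algebraMap K E).toMonoidHom
  suffices hφ : ⊤ ≤ (powMonoidHom n : Eˣ →* Eˣ).range.comap φ by
    obtain ⟨u, hu⟩ := hφ (Subgroup.mem_top (Units.mk0 a ha))
    exact ⟨u, congr(Units.val $hu)⟩
  rw [← hS, sup_le_iff, Subgroup.closure_le]
  constructor
  · intro s hs
    obtain ⟨x, hx⟩ := h s hs
    have hx_unit : IsUnit x := (isUnit_pow_iff hn).mp (hx ▸ s.isUnit.map (algebraMap K E))
    exact ⟨hx_unit.unit, Units.ext hx⟩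
  · rintro _ ⟨v, rfl⟩
    exact ⟨φ v, (map_pow φ v n).symm⟩

theorem mem_intermediateField_of_pow_eq_pow {K Ω : Type*} [Field K] [Field Ω] [Algebra K Ω]
    {n : ℕ} [NeZero n] [HasEnoughRootsOfUnity K n] {E : IntermediateField K Ω} {x y : Ω}
    (hy : y ∈ E) (h : x ^ n = y ^ n) : x ∈ E := by
  obtain ⟨ζ, hζ⟩ := HasEnoughRootsOfUnity.exists_primitiveRoot K n
  rcases eq_or_ne y 0 with rfl | hy0
  · rw [zero_pow (NeZero.ne n)] at h
    exact eq_zero_of_pow_eq_zero h ▸ hy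
  obtain ⟨i, -, hi⟩ := (hζ.map_of_injective (algebraMap K Ω).injective).eq_pow_of_pow_eq_one
    (ξ := x / y) (by rw [div_pow, h, div_self (pow_ne_zero n hy0)])
  rw [← div_mul_cancel₀ x hy0, ← hi]
  exact mul_mem (pow_mem (E.algebraMap_mem ζ) i) hy

theorem finrank_kummerExtension_le {K Ω : Type*} [Field K] [Field Ω] [Algebra K Ω]
    [IsAlgClosed Ω] {n : ℕ} [NeZero n] [HasEnoughRootsOfUnity K n] {S : Finset Kˣ}
    (hS : Subgroup.closure S ⊔ (powMonoidHom n : Kˣ →* Kˣ).range = ⊤) :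
    FiniteDimensional K (kummerExtension K Ω n) ∧
      Module.finrank K (kummerExtension K Ω n) ≤ n ^ S.card := by
  classical
  obtain ⟨E, _, hE, hE_root⟩ :=
    exists_finrank_le_forall_exists_pow_eq Ω (NeZero.pos n) (S.image Units.val)
  have le_E : kummerExtension K Ω n ≤ E := adjoin_le_iff.mpr fun x ⟨a, hx⟩ ↦ by
    obtain ⟨y, hy⟩ := exists_pow_eq_algebraMap_of_closure_sup_range_eq_top (E := E) (NeZero.ne n)
      hS (fun s hs ↦ hE_root s (Finset.mem_image_of_mem _ hs)) a
    exact mem_intermediateField_of_pow_eq_pow y.2 (hx.trans congr(algebraMap E Ω $hy).symm)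
  exact finiteDimensional_and_finrank_le_of_le le_E
    (hE.trans (Nat.pow_le_pow_right (NeZero.pos n) Finset.card_image_le))

end Kummer

section Hensel

open Polynomial IsLocalRing

theorem exists_natDegree_le_X_add_C_pow_eq {R : Type*} [CommRing R] (s : R) (n : ℕ) :
    ∃ k : R[X], k.natDegree ≤ n ∧
      (X + C s) ^ (n + 1) = X ^ (n + 1) + C ((n + 1) * s) * X ^ n + C (s ^ 2) * k := by
  induction n with
  | zero => exact ⟨0, by simp, by simp⟩
  | succ n ih =>
    obtain ⟨k, hk, h⟩ := ih
    refine ⟨X * k + C (n + 1 : R) * X ^ n + C s * k, by compute_degree!; omega, ?_⟩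
    rw [pow_succ, h]
    simp only [map_mul, map_add, map_pow, map_natCast, map_one, Nat.cast_succ]
    ring

theorem exists_pow_eq_one_add_sq_mul {R : Type*} [CommRing R] [HenselianLocalRing R] {n : ℕ}
    (hn : n ≠ 0) {t : R} (ht : t ∈ maximalIdeal R) : ∃ z : R, z ^ n = 1 + n ^ 2 * t := by
  obtain ⟨m, rfl⟩ := Nat.exists_eq_succ_of_ne_zero hn
  set s : R := (m + 1) * t
  obtain ⟨k, hk, hX⟩ := exists_natDegree_le_X_add_C_pow_eq s m
  -- Hensel's lemma needs a monic polynomial, so we solve for `v` in `z = 1 + s / v`.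
  let f : R[X] := X ^ (m + 1) - (X ^ m + C t * k)
  have f_monic : f.Monic := monic_X_pow_sub <| degree_lt_iff_coeff_zero _ _ |>.mpr fun i hi ↦ by
    simp [coeff_X_pow, coeff_eq_zero_of_natDegree_lt (hk.trans_lt hi), (show i ≠ m by omega)]
  have eval_one_mem : f.eval 1 ∈ maximalIdeal R := by
    simpa [f] using Ideal.mul_mem_right _ _ ht
  have derivative_eq : f.derivative.eval 1 = 1 - t * k.derivative.eval 1 := by
    simp only [f, derivative_sub, derivative_add, derivative_X_pow, derivative_C_mul, eval_sub,
      eval_add, eval_mul, eval_C, eval_pow, eval_X, one_pow, Nat.cast_succ]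
    ring
  have derivative_unit : IsUnit (f.derivative.eval 1) := by
    rw [derivative_eq]
    exact isUnit_one_sub_self_of_mem_nonunits _ (Ideal.mul_mem_right _ _ ht)
  obtain ⟨v, hfv, hv⟩ := HenselianLocalRing.is_henselian f f_monic 1 eval_one_mem derivative_unit
  have v_unit : IsUnit v := by
    simpa using isUnit_one_sub_self_of_mem_nonunits _ (neg_mem hv)
  obtain ⟨y, hy⟩ := v_unit.exists_right_inv
  have pow_eq : v ^ (m + 1) = v ^ m + t * k.eval v := by
    simpa [f, sub_eq_zero] using hfv
  have add_pow_eq : (v + s) ^ (m + 1) = v ^ (m + 1) * (1 + (m + 1) ^ 2 * t) := by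
    have := congr(eval v $hX)
    simp only [eval_add, eval_mul, eval_pow, eval_X, eval_C] at this
    linear_combination this - (m + 1) ^ 2 * t * pow_eq
  refine ⟨(v + s) * y, ?_⟩
  calc ((v + s) * y) ^ (m + 1) = (v * y) ^ (m + 1) * (1 + (m + 1) ^ 2 * t) := by
        rw [mul_pow, add_pow_eq, mul_pow]; ring
    _ = 1 + (m + 1 : ℕ) ^ 2 * t := by rw [hy, one_pow, one_mul, Nat.cast_succ]

theorem exists_closure_sup_eq_top_of_surjective {G G' : Type*} [Group G] [Group G'] {φ : G →* G'}
    (hφ : Function.Surjective φ) {H : Subgroup G} (hH : φ.ker ≤ H) {T : Finset G'}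
    (hT : Subgroup.closure (T : Set G') = ⊤) :
    ∃ S : Finset G, S.card ≤ T.card ∧ Subgroup.closure S ⊔ H = ⊤ := by
  classical
  refine ⟨T.image (Function.surjInv hφ), Finset.card_image_le, top_unique ?_⟩
  calc ⊤ = ((Subgroup.closure (T.image (Function.surjInv hφ))).map φ).comap φ := by
        rw [MonoidHom.map_closure, Finset.coe_image, ← Set.image_comp,
          (Function.rightInverse_surjInv hφ).comp_eq_id, Set.image_id, hT, Subgroup.comap_top]
    _ ≤ _ := (Subgroup.comap_map_eq φ _).trans_le (sup_le_sup_left hH _)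

theorem surjective_units_map_quotientMk {R : Type*} [CommRing R] [IsLocalRing R] {I : Ideal R}
    (hI : I ≠ ⊤) : Function.Surjective (Units.map (Ideal.Quotient.mk I).toMonoidHom) :=
  have := Ideal.Quotient.nontrivial_iff.mpr hI
  surjective_units_map_of_local_ringHom _ Ideal.Quotient.mk_surjective
    (.of_surjective _ Ideal.Quotient.mk_surjective)

theorem ker_units_map_quotientMk_le_range_powMonoidHom {R : Type*} [CommRing R]
    [HenselianLocalRing R] {n : ℕ} (hn : n ≠ 0) :
    (Units.map (Ideal.Quotient.mk (Ideal.span {(n : R) ^ 2} * maximalIdeal R)).toMonoidHom).ker ≤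
      (powMonoidHom n : Rˣ →* Rˣ).range := by
  intro u hu
  obtain ⟨t, ht, htu⟩ := Ideal.mem_span_singleton_mul.mp
    (Ideal.Quotient.eq.mp congr(Units.val $hu))
  obtain ⟨z, hz⟩ := exists_pow_eq_one_add_sq_mul hn ht
  have hzu : z ^ n = u := by rw [hz, htu, add_sub_cancel]
  exact ⟨((isUnit_pow_iff hn).mp (hzu ▸ u.isUnit)).unit, Units.ext hzu⟩

theorem finite_quotient_of_finite_residueField {R : Type*} [CommRing R] [IsDomain R]
    [IsDiscreteValuationRing R] [Finite (ResidueField R)] {I : Ideal R} (hI : I ≠ ⊥) :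
    Finite (R ⧸ I) := by
  obtain ⟨ϖ, hϖ⟩ := IsDiscreteValuationRing.exists_irreducible R
  obtain ⟨k, rfl⟩ := IsDiscreteValuationRing.ideal_eq_span_pow_irreducible hI hϖ
  rw [← Ideal.span_singleton_pow, ← hϖ.maximalIdeal_eq]
  have : Finite (R ⧸ maximalIdeal R) := ‹Finite (ResidueField R)›
  exact Ideal.finite_quotient_pow (IsNoetherian.noetherian _) k

theorem exists_card_le_one_closure_eq_top (G : Type*) [Group G] [IsCyclic G] :
    ∃ T : Finset G, T.card ≤ 1 ∧ Subgroup.closure (T : Set G) = ⊤ := by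
  obtain ⟨g, hg⟩ := IsCyclic.exists_generator (α := G)
  exact ⟨{g}, by simp, by
    rw [Finset.coe_singleton, ← Subgroup.zpowers_eq_closure]
    exact Subgroup.eq_top_iff' _ |>.mpr hg⟩

theorem exists_closure_units_quotient_eq_top {R : Type*} [CommRing R] [IsDomain R]
    [IsDiscreteValuationRing R] [Finite (ResidueField R)] {I : Ideal R} (hI : I ≠ ⊥) :
    ∃ T : Finset (R ⧸ I)ˣ, (I = maximalIdeal R → T.card ≤ 1) ∧
      Subgroup.closure (T : Set (R ⧸ I)ˣ) = ⊤ := by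
  have : Finite (R ⧸ I) := finite_quotient_of_finite_residueField hI
  by_cases hI_max : I = maximalIdeal R
  · have : I.IsPrime := hI_max ▸ inferInstance
    obtain ⟨T, hT_card, hT⟩ := exists_card_le_one_closure_eq_top (R ⧸ I)ˣ
    exact ⟨T, fun _ ↦ hT_card, hT⟩
  · cases nonempty_fintype (R ⧸ I)ˣ
    exact ⟨Finset.univ, fun h ↦ absurd h hI_max, by simp⟩

theorem exists_units_closure_sup_range_powMonoidHom_eq_top {R : Type*} [CommRing R] [IsDomain R]
    [IsDiscreteValuationRing R] [HenselianLocalRing R] [Finite (ResidueField R)] {n : ℕ}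
    (hn : (n : R) ≠ 0) :
    ∃ S : Finset Rˣ, (IsUnit (n : R) → S.card ≤ 1) ∧
      Subgroup.closure S ⊔ (powMonoidHom n : Rˣ →* Rˣ).range = ⊤ := by
  have I_ne_bot : Ideal.span {(n : R) ^ 2} * maximalIdeal R ≠ ⊥ :=
    mul_ne_zero (by simpa using hn) (IsDiscreteValuationRing.not_a_field R)
  have I_ne_top : Ideal.span {(n : R) ^ 2} * maximalIdeal R ≠ ⊤ :=
    ne_top_of_le_ne_top (maximalIdeal.isMaximal R).ne_top Ideal.mul_le_right
  have I_eq (h : IsUnit (n : R)) :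
      Ideal.span {(n : R) ^ 2} * maximalIdeal R = maximalIdeal R := by
    rw [Ideal.span_singleton_eq_top.mpr (h.pow 2), Ideal.top_mul]
  obtain ⟨T, hT_card, hT⟩ := exists_closure_units_quotient_eq_top I_ne_bot
  obtain ⟨S, hS_card, hS⟩ := exists_closure_sup_eq_top_of_surjective
    (surjective_units_map_quotientMk I_ne_top)
    (ker_units_map_quotientMk_le_range_powMonoidHom fun h ↦ hn (by simp [h])) hT
  exact ⟨S, fun h ↦ hS_card.trans (hT_card (I_eq h)), hS⟩

theorem exists_closure_sup_range_powMonoidHom_eq_top_of_units {R K : Type*} [CommRing R]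
    [IsDomain R] [IsDiscreteValuationRing R] [Field K] [Algebra R K] [IsFractionRing R K] {n : ℕ}
    (S : Finset Rˣ) (hS : Subgroup.closure S ⊔ (powMonoidHom n : Rˣ →* Rˣ).range = ⊤) :
    ∃ S' : Finset Kˣ, S'.card ≤ S.card + 1 ∧
      Subgroup.closure S' ⊔ (powMonoidHom n : Kˣ →* Kˣ).range = ⊤ := by
  classical
  obtain ⟨ϖ, hϖ⟩ := IsDiscreteValuationRing.exists_irreducible R
  let φ : Rˣ →* Kˣ := Units.map (algebraMap R K).toMonoidHom
  let π : Kˣ := Units.mk0 (algebraMap R K ϖ) (by simpa using hϖ.ne_zero)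
  let H := Subgroup.closure (insert π (S.image φ) : Finset Kˣ) ⊔ (powMonoidHom n : Kˣ →* Kˣ).range
  have mem_H {x : Kˣ} (hx : x ∈ insert π (S.image φ)) : x ∈ H :=
    Subgroup.mem_sup_left (Subgroup.subset_closure hx)
  have units_le : ⊤ ≤ H.comap φ := by
    rw [← hS, sup_le_iff, Subgroup.closure_le]
    refine ⟨fun s hs ↦ mem_H (Finset.mem_insert_of_mem (Finset.mem_image_of_mem φ hs)), ?_⟩
    rintro _ ⟨v, rfl⟩
    exact Subgroup.mem_sup_right ⟨φ v, (map_pow φ v n).symm⟩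
  refine ⟨insert π (S.image φ), (Finset.card_insert_le _ _).trans
    (Nat.succ_le_succ Finset.card_image_le), top_unique fun x _ ↦ ?_⟩
  obtain ⟨i, u, hx⟩ :=
    IsDiscreteValuationRing.exists_units_eq_smul_zpow_of_irreducible hϖ x.ne_zero
  have hx' : x = φ u * π ^ i := Units.ext (by
    simpa [φ, π, Units.smul_def, Algebra.smul_def] using hx)
  exact hx' ▸ mul_mem (units_le (Subgroup.mem_top u)) (zpow_mem (mem_H (by simp)) i)

end Hensel

section LocalField

open ValuativeRel

theorem isNonarchimedeanLocalField_ofValuation (K : Type*) [NontriviallyNormedField K]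
    [IsUltrametricDist K] [ProperSpace K] :
    letI : ValuativeRel K := .ofValuation (NormedField.valuation (K := K))
    IsNonarchimedeanLocalField K := by
  let : ValuativeRel K := .ofValuation (NormedField.valuation (K := K))
  have : (NormedField.valuation (K := K)).Compatible := .ofValuation _
  have := IsValuativeTopology.of_mem_nhds_iff_vle (NormedField.valuation (K := K))
    fun {s x} ↦ @Valued.mem_nhds K _ _ _ NormedField.toValued s x
  obtain ⟨x, hx0, hx1⟩ := NormedField.exists_norm_lt_one K
  refine { condition := ⟨valuation K x, by simpa using hx0, fun h ↦ hx1.ne ?_⟩ }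
  simpa [← NNReal.coe_inj] using
    (isEquiv (valuation K) (NormedField.valuation (K := K))).eq_one_iff_eq_one.mp h

theorem henselianLocalRing_of_isAdicComplete (R : Type*) [CommRing R] [IsLocalRing R]
    [IsAdicComplete (IsLocalRing.maximalIdeal R) R] : HenselianLocalRing R where
  is_henselian f hf a ha ha' :=
    (IsAdicComplete.henselianRing R (IsLocalRing.maximalIdeal R)).is_henselian f hf a ha
      (ha'.map _)

theorem exists_closure_sup_range_powMonoidHom_eq_top {K : Type*} [NontriviallyNormedField K]
    [IsUltrametricDist K] [ProperSpace K] {n : ℕ} (hn : (n : K) ≠ 0) :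
    ∃ S : Finset Kˣ, (‖(n : K)‖ = 1 → S.card ≤ 2) ∧
      Subgroup.closure S ⊔ (powMonoidHom n : Kˣ →* Kˣ).range = ⊤ := by
  let : ValuativeRel K := .ofValuation (NormedField.valuation (K := K))
  have : (NormedField.valuation (K := K)).Compatible := .ofValuation _
  have := isNonarchimedeanLocalField_ofValuation K
  have := henselianLocalRing_of_isAdicComplete 𝒪[K]
  have isUnit_of_norm_eq_one (h : ‖(n : K)‖ = 1) : IsUnit (n : 𝒪[K]) := by
    refine (Valuation.integer.integers (valuation K)).isUnit_iff_valuation_eq_one.mpr ?_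
    rw [(isEquiv (valuation K) (NormedField.valuation (K := K))).eq_one_iff_eq_one]
    simpa [← NNReal.coe_inj] using h
  obtain ⟨S, hS_card, hS⟩ := exists_units_closure_sup_range_powMonoidHom_eq_top (R := 𝒪[K])
    (n := n) fun h ↦ hn (by simpa using congr(Subtype.val $h))
  obtain ⟨S', hS'_card, hS'⟩ := exists_closure_sup_range_powMonoidHom_eq_top_of_units (K := K) S hS
  exact ⟨S', fun h ↦ hS'_card.trans (Nat.succ_le_succ (hS_card (isUnit_of_norm_eq_one h))), hS'⟩

end LocalField

section Padic

open IntermediateField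

variable (p : ℕ) [Fact p.Prime] {n : ℕ}

theorem exists_closure_sup_range_powMonoidHom_eq_top_of_padic (hn : n ≠ 0)
    (K : IntermediateField ℚ_[p] (AlgebraicClosure ℚ_[p])) [FiniteDimensional ℚ_[p] K] :
    ∃ S : Finset Kˣ, (p.Coprime n → S.card ≤ 2) ∧
      Subgroup.closure S ⊔ (powMonoidHom n : Kˣ →* Kˣ).range = ⊤ := by
  let E : IntermediateField ℚ_[p] (PadicAlgCl p) := K
  have : FiniteDimensional ℚ_[p] E := ‹_›
  have : IsUltrametricDist E :=
    ⟨fun x y z ↦ IsUltrametricDist.dist_triangle_max (x : PadicAlgCl p) y z⟩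
  have : ProperSpace E := FiniteDimensional.proper ℚ_[p] E
  have : CharZero E := charZero_of_injective_algebraMap (algebraMap ℚ_[p] E).injective
  obtain ⟨S, hS_card, hS⟩ := exists_closure_sup_range_powMonoidHom_eq_top (K := E)
    (Nat.cast_ne_zero.mpr hn)
  refine ⟨S, fun hpn ↦ hS_card ?_, hS⟩
  rw [← map_natCast (algebraMap ℚ_[p] E), norm_algebraMap', Padic.norm_natCast_eq_one_iff]
  exact hpn

theorem exists_forall_isAbelianGalois_le_of_exponent_dvd (hn : n ≠ 0) :
    ∃ E : IntermediateField ℚ_[p] (AlgebraicClosure ℚ_[p]), FiniteDimensional ℚ_[p] E ∧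
      (p.Coprime n → Module.finrank ℚ_[p] E ≤ n * n ^ 2) ∧
      ∀ L : IntermediateField ℚ_[p] (AlgebraicClosure ℚ_[p]), FiniteDimensional ℚ_[p] L →
        IsAbelianGalois ℚ_[p] L → Monoid.exponent Gal(L/ℚ_[p]) ∣ n → L ≤ E := by
  have : NeZero n := ⟨hn⟩
  have : NeZero (n : AlgebraicClosure ℚ_[p]) := ⟨Nat.cast_ne_zero.mpr hn⟩
  obtain ⟨K, _, hK, _⟩ :=
    exists_intermediateField_hasEnoughRootsOfUnity (n := n) ℚ_[p] (AlgebraicClosure ℚ_[p])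
  obtain ⟨S, hS_card, hS⟩ := exists_closure_sup_range_powMonoidHom_eq_top_of_padic p hn K
  let E := kummerExtension K (AlgebraicClosure ℚ_[p]) n
  obtain ⟨_, hE⟩ : FiniteDimensional K E ∧ Module.finrank K E ≤ n ^ S.card :=
    finrank_kummerExtension_le hS
  refine ⟨E.restrictScalars ℚ_[p], FiniteDimensional.trans ℚ_[p] K E, fun hpn ↦ ?_,
    fun L _ _ hL ↦ le_kummerExtension K L hL⟩
  calc Module.finrank ℚ_[p] E = Module.finrank ℚ_[p] K * Module.finrank K E :=
        (Module.finrank_mul_finrank ℚ_[p] K E).symm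
    _ ≤ n * n ^ 2 :=
        Nat.mul_le_mul hK (hE.trans (Nat.pow_le_pow_right (NeZero.pos n) (hS_card hpn)))

-- The finitely many primes `p ≤ d` contribute a maximum; the others are prime to `d!`.
theorem exists_forall_isAbelianGalois_le_of_finrank_le (d : ℕ) :
    ∃ δ : ℕ, ∀ (p : ℕ) [Fact p.Prime],
      ∃ E : IntermediateField ℚ_[p] (AlgebraicClosure ℚ_[p]), FiniteDimensional ℚ_[p] E ∧
        Module.finrank ℚ_[p] E ≤ δ ∧
        ∀ L : IntermediateField ℚ_[p] (AlgebraicClosure ℚ_[p]), FiniteDimensional ℚ_[p] L →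
          Module.finrank ℚ_[p] L ≤ d → IsAbelianGalois ℚ_[p] L → L ≤ E := by
  choose E hE_fin hE_le hE using fun (p : ℕ) [Fact p.Prime] ↦
    exists_forall_isAbelianGalois_le_of_exponent_dvd p d.factorial_ne_zero
  let smallDegree (p : ℕ) : ℕ :=
    if hp : p.Prime then
      have := Fact.mk hp
      Module.finrank ℚ_[p] (E p)
    else 0
  refine ⟨max (d.factorial * d.factorial ^ 2) ((Finset.range (d + 1)).sup smallDegree),
    fun p hp ↦ ⟨E p, hE_fin p, ?_, fun L _ hL _ ↦ hE p L inferInstance inferInstance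
      (exponent_dvd_factorial_of_finrank_le hL)⟩⟩
  rcases le_or_gt p d with hpd | hpd
  · calc Module.finrank ℚ_[p] (E p) = smallDegree p := by simp [smallDegree, hp.out]
      _ ≤ _ := le_max_of_le_right (Finset.le_sup (Finset.mem_range_succ_iff.mpr hpd))
  · exact le_max_of_le_left <| hE_le p <|
      (Nat.coprime_factorial_iff hp.out.ne_one).mpr (by rwa [hp.out.minFac_eq])

end Padic

/-- For every positive integer `d` there is a constant `δ_d`, depending
only on `d`, such that for every prime `p` the compositum `ℚ_p(d)_ab` (inside a fixed
algebraic closure of `ℚ_p`) of all abelian extensions of `ℚ_p` of degree `≤ d` is finite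
over `ℚ_p` of degree `≤ δ_d`. -/
theorem stmt9 (d : ℕ) (hd : 0 < d) :
    ∃ δ : ℕ, ∀ (p : ℕ) [Fact p.Prime],
      FiniteDimensional ℚ_[p]
        ↥(⨆ L ∈ {L : IntermediateField ℚ_[p] (AlgebraicClosure ℚ_[p]) |
            FiniteDimensional ℚ_[p] ↥L ∧ Module.finrank ℚ_[p] ↥L ≤ d ∧
            IsGalois ℚ_[p] ↥L ∧ ∀ σ τ : ↥L ≃ₐ[ℚ_[p]] ↥L, σ * τ = τ * σ}, L) ∧
      Module.finrank ℚ_[p]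
        ↥(⨆ L ∈ {L : IntermediateField ℚ_[p] (AlgebraicClosure ℚ_[p]) |
            FiniteDimensional ℚ_[p] ↥L ∧ Module.finrank ℚ_[p] ↥L ≤ d ∧
            IsGalois ℚ_[p] ↥L ∧ ∀ σ τ : ↥L ≃ₐ[ℚ_[p]] ↥L, σ * τ = τ * σ}, L) ≤ δ := by
  obtain ⟨δ, hδ⟩ := exists_forall_isAbelianGalois_le_of_finrank_le d
  refine ⟨δ, fun p _ ↦ ?_⟩
  obtain ⟨E, _, hE, hL⟩ := hδ p
  refine finiteDimensional_and_finrank_le_of_le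
    (iSup₂_le fun L ⟨hL_fin, hL_le, hL_galois, hL_comm⟩ ↦ ?_) hE
  have : IsAbelianGalois ℚ_[p] L := { is_comm := ⟨hL_comm⟩ }
  exact hL L hL_fin hL_le this
end

section
/- Let K be a field of characteristic 0 containing all roots of unity, and let L be a Galois extension of K with L ≠ K̄ (the algebraic closure). Assume K is stably p-×μ-indivisible for some prime p. Then for any subfield M of L over which L is algebraic, the extension K̄/M_div is infinite, where M_div is the field generated over Q by the divisible elements of multiplicative groups of all finite extensions of M; i.e., M is TKND. -/
/-!
Divisible elements of finite extensions of `M ≤ L` already lie in `L`, so `M_div ≤ L`; and `K̄` is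
not a proper finite extension of `L` by the Artin–Schreier theorem.

A divisible element `x` of a finite extension of `M` is divisible in `L N` for some finite Galois
extension `N` of `K`. Let `τ` fix `L`. Automorphisms fixing `N` commute with `τ` on `L N`, and they
move a root `z` of `x` only by a root of unity in `K`, once `N` contains `x`. Hence they fix
`τ z / z`, which thus lies in `N`; so `τ x / x` is divisible in `N` and is a root of unity. Apply
this to `y` with `y ^ n = x`, where `τ ^ n` is the identity on `L N`: from `τ y = ζ y` with `ζ` in
`K` it follows that `ζ ^ n = 1`, that is, `τ x = x`.
-/

open IntermediateField
open scoped commutatorElement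

/-- `K` contains all roots of unity of its extension `Ω`. -/
def ContainsRootsOfUnity (K Ω : Type*) [Field K] [Field Ω] [Algebra K Ω] : Prop :=
  ∀ ζ : Ω, IsOfFinOrder ζ → ζ ∈ (algebraMap K Ω).range

/-- `x` is a divisible element of the multiplicative group `E^×`, that is, `x ∈ E^{×∞}`. The
case `n = 1` of the second clause says that `x` lies in `E`. -/
def DivisibleIn {Ω S : Type*} [Field Ω] [SetLike S Ω] (E : S) (x : Ω) : Prop :=
  x ≠ 0 ∧ ∀ n : ℕ, 0 < n → ∃ y ∈ E, y ^ n = x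

/-- `K` is stably `×μ`-indivisible: the divisible elements of the multiplicative group of every
finite extension of `K`, taken inside `Ω`, are roots of unity. -/
def StablyMulIndivisible (K Ω : Type*) [Field K] [Field Ω] [Algebra K Ω] : Prop :=
  ∀ E : IntermediateField K Ω, FiniteDimensional K E → ∀ x, DivisibleIn E x → IsOfFinOrder x

/-- The field `F_div`, generated by the divisible elements of the multiplicative groups of all
finite extensions of `F` inside `Ω`. -/
def divSubfield (F Ω : Type*) [Field F] [Field Ω] [Algebra F Ω] : Subfield Ω :=
  Subfield.closure {x | ∃ E : IntermediateField F Ω, FiniteDimensional F E ∧ DivisibleIn E x}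

namespace DivisibleIn

variable {Ω S T : Type*} [Field Ω] [SetLike S Ω] [SetLike T Ω] {E : S} {E' : T} {x : Ω}

theorem mem (hx : DivisibleIn E x) : x ∈ E := by
  obtain ⟨y, hy, rfl⟩ := hx.2 1 one_pos
  rwa [pow_one]

theorem mono (hle : ∀ z ∈ E, z ∈ E') (hx : DivisibleIn E x) : DivisibleIn E' x :=
  ⟨hx.1, fun n hn => (hx.2 n hn).imp fun y hy => ⟨hle y hy.1, hy.2⟩⟩

end DivisibleIn

section Kummer

variable {K Ω : Type*} [Field K] [Field Ω] [Algebra K Ω]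

theorem pow_apply_eq_pow_smul {σ : Gal(Ω/K)} {a : K} {v : Ω} (h : σ v = a • v) (n : ℕ) :
    (σ ^ n) v = a ^ n • v := by
  induction n with
  | zero => simp
  | succ n ih => rw [pow_succ, AlgEquiv.mul_apply, h, map_smul, ih, smul_smul, pow_succ']

namespace ContainsRootsOfUnity

theorem exists_eq_smul_of_isOfFinOrder_div (hμ : ContainsRootsOfUnity K Ω) {a b : Ω}
    (hb : b ≠ 0) (h : IsOfFinOrder (a / b)) : ∃ k : K, a = k • b := by
  obtain ⟨k, hk⟩ := hμ _ h
  exact ⟨k, by rw [Algebra.smul_def, hk, div_mul_cancel₀ _ hb]⟩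

theorem exists_eq_smul_of_pow_eq_pow (hμ : ContainsRootsOfUnity K Ω) {a b : Ω} {n : ℕ}
    (hb : b ≠ 0) (hn : 0 < n) (h : a ^ n = b ^ n) : ∃ k : K, a = k • b :=
  hμ.exists_eq_smul_of_isOfFinOrder_div hb <| isOfFinOrder_iff_pow_eq_one.mpr
    ⟨n, hn, by rw [div_pow, h, div_self (pow_ne_zero _ hb)]⟩

theorem divisibleIn_of_pow [IsAlgClosed Ω] (hμ : ContainsRootsOfUnity K Ω)
    {E : IntermediateField K Ω} {y : Ω} {m : ℕ} (hm : 0 < m) (hy : DivisibleIn E (y ^ m)) :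
    DivisibleIn E y := by
  have hy0 : y ≠ 0 := fun h => hy.1 (by rw [h, zero_pow hm.ne'])
  refine ⟨hy0, fun n hn => ?_⟩
  obtain ⟨z, hzE, hz⟩ := hy.2 (n * m) (Nat.mul_pos hn hm)
  obtain ⟨w, rfl⟩ := IsAlgClosed.exists_pow_nat_eq y hn
  have hz0 : z ≠ 0 := fun h => hy.1 (by rw [← hz, h, zero_pow (Nat.mul_pos hn hm).ne'])
  obtain ⟨k, rfl⟩ := hμ.exists_eq_smul_of_pow_eq_pow hz0 (Nat.mul_pos hn hm)
    (by rw [hz, pow_mul] : w ^ (n * m) = z ^ (n * m))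
  exact ⟨k • z, E.smul_mem hzE, rfl⟩

end ContainsRootsOfUnity

end Kummer

section ArtinSchreier

variable {F Ω : Type*} [Field F] [CharZero F] [Field Ω] [Algebra F Ω] [IsAlgClosed Ω]
  [FiniteDimensional F Ω]

-- If `σ` has order `n`, some primitive `n`-th root of unity `ξ` is an eigenvalue of `σ`. An `n`-th
-- root `c` of an eigenvector satisfies `σ c = u c` with `u ^ n = ξ`, so `c = (σ ^ n) c = ξ c`.
theorem ContainsRootsOfUnity.eq_one_of_finiteDimensional (hμ : ContainsRootsOfUnity F Ω)
    (σ : Gal(Ω/F)) : σ = 1 := by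
  have hσ : IsOfFinOrder σ := isOfFinOrder_of_finite σ
  have : CharZero Ω := charZero_of_injective_algebraMap (algebraMap F Ω).injective
  have hn : 0 < orderOf σ := hσ.orderOf_pos
  have : NeZero (orderOf σ : Ω) := ⟨Nat.cast_ne_zero.mpr hn.ne'⟩
  obtain ⟨ζ, hζ⟩ := HasEnoughRootsOfUnity.exists_primitiveRoot Ω (orderOf σ)
  obtain ⟨ξ, rfl⟩ := hμ ζ (hζ.isOfFinOrder hn.ne')
  have hξ : IsPrimitiveRoot ξ (orderOf σ) := hζ.of_map_of_injective (algebraMap F Ω).injective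
  obtain ⟨v, hv⟩ : ∃ v, Module.End.HasEigenvector σ.toLinearMap ξ v := by
    refine (Module.End.hasEigenvalue_of_isRoot ?_).exists_hasEigenvector
    simp [minpoly_algEquiv_toLinearMap σ hσ, hξ.pow_eq_one]
  obtain ⟨c, rfl⟩ := IsAlgClosed.exists_pow_nat_eq v hn
  have hc : c ≠ 0 := fun h => hv.2 (by rw [h, zero_pow hn.ne'])
  have hu : (σ c / c) ^ orderOf σ = algebraMap F Ω ξ := by
    rw [div_pow, ← map_pow, div_eq_iff (pow_ne_zero _ hc), ← Algebra.smul_def]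
    exact hv.apply_eq_smul
  obtain ⟨u, hσc⟩ := hμ.exists_eq_smul_of_isOfFinOrder_div hc
    (IsOfFinOrder.of_pow (hu ▸ hζ.isOfFinOrder hn.ne') hn.ne')
  have hpow : u ^ orderOf σ = 1 := by
    have h := pow_apply_eq_pow_smul hσc (orderOf σ)
    rw [pow_orderOf_eq_one, AlgEquiv.one_apply] at h
    exact smul_left_injective F hc (h.symm.trans (one_smul F c).symm)
  have hξ1 : ξ = 1 := by
    rw [hσc, Algebra.smul_def, mul_div_cancel_right₀ _ hc, ← map_pow, hpow] at hu
    exact (algebraMap F Ω).injective hu.symm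
  rwa [hξ1, IsPrimitiveRoot.one_left_iff, orderOf_eq_one_iff] at hξ

theorem ContainsRootsOfUnity.algebraMap_surjective_of_finiteDimensional
    (hμ : ContainsRootsOfUnity F Ω) : Function.Surjective (algebraMap F Ω) := by
  have : IsAlgClosure F Ω := ⟨inferInstance, inferInstance⟩
  refine fun x => (IsGalois.mem_range_algebraMap_iff_fixed x).mpr fun σ => ?_
  rw [hμ.eq_one_of_finiteDimensional σ, AlgEquiv.one_apply]

end ArtinSchreier

theorem ContainsRootsOfUnity.not_finiteDimensional_of_le {K Ω : Type*} [Field K] [CharZero K]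
    [Field Ω] [Algebra K Ω] [IsAlgClosed Ω] (hμ : ContainsRootsOfUnity K Ω)
    {L : IntermediateField K Ω} (hL : L ≠ ⊤) {D : Subfield Ω} (hDL : D ≤ L.toSubfield) :
    ¬ FiniteDimensional D Ω := by
  intro hfin
  have hfinL : FiniteDimensional L Ω :=
    inferInstanceAs (FiniteDimensional (Subfield.extendScalars hDL) Ω)
  have hμL : ContainsRootsOfUnity L Ω := fun ζ hζ => by
    obtain ⟨k, rfl⟩ := hμ ζ hζ
    exact ⟨algebraMap K L k, rfl⟩
  refine hL (eq_top_iff.mpr fun x _ => ?_)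
  obtain ⟨y, rfl⟩ := hμL.algebraMap_surjective_of_finiteDimensional x
  exact y.2

section DivisibleElements

variable {K Ω : Type*} [Field K] [Field Ω] [Algebra K Ω]

theorem apply_comm_of_mem_sup_of_mem_fixingSubgroup {L N : IntermediateField K Ω}
    [Normal K L] [Normal K N] {σ τ : Gal(Ω/K)} (hσ : σ ∈ N.fixingSubgroup)
    (hτ : τ ∈ L.fixingSubgroup) {z : Ω} (hz : z ∈ L ⊔ N) : σ (τ z) = τ (σ z) := by
  have hL : L.fixingSubgroup.Normal := L.restrictNormalHom_ker ▸ MonoidHom.normal_ker _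
  have hN : N.fixingSubgroup.Normal := N.restrictNormalHom_ker ▸ MonoidHom.normal_ker _
  have hmem : ⁅τ⁻¹, σ⁻¹⁆ ∈ (L ⊔ N).fixingSubgroup := by
    rw [fixingSubgroup_sup]
    exact Subgroup.commutator_le_inf _ _ (Subgroup.commutator_mem_commutator
      (inv_mem hτ) (inv_mem hσ))
  have hfix : ⁅τ⁻¹, σ⁻¹⁆ z = z := (mem_fixingSubgroup_iff _ _).mp hmem z hz
  have heq : τ * σ = σ * τ * ⁅τ⁻¹, σ⁻¹⁆ := by
    rw [commutatorElement_def]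
    group
  calc σ (τ z) = (σ * τ * ⁅τ⁻¹, σ⁻¹⁆) z := by rw [AlgEquiv.mul_apply, hfix, AlgEquiv.mul_apply]
    _ = τ (σ z) := by rw [← heq, AlgEquiv.mul_apply]

theorem exists_pow_mem_fixingSubgroup_sup {L N : IntermediateField K Ω} [Normal K N]
    [FiniteDimensional K N] {τ : Gal(Ω/K)} (hτ : τ ∈ L.fixingSubgroup) :
    ∃ n : ℕ, 0 < n ∧ τ ^ n ∈ (L ⊔ N).fixingSubgroup := by
  obtain ⟨n, hn, hpow⟩ := isOfFinOrder_iff_pow_eq_one.mp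
    (isOfFinOrder_of_finite (AlgEquiv.restrictNormalHom N τ))
  refine ⟨n, hn, ?_⟩
  rw [fixingSubgroup_sup]
  refine Subgroup.mem_inf.mpr ⟨pow_mem hτ n, ?_⟩
  rwa [← restrictNormalHom_ker, MonoidHom.mem_ker, map_pow]

namespace ContainsRootsOfUnity

theorem apply_div_self_mem_of_pow_mem [IsGalois K Ω] (hμ : ContainsRootsOfUnity K Ω)
    {L N : IntermediateField K Ω} [Normal K L] [Normal K N] {τ : Gal(Ω/K)}
    (hτ : τ ∈ L.fixingSubgroup) {z : Ω} (hz : z ∈ L ⊔ N) {n : ℕ} (hn : 0 < n)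
    (hzn : z ^ n ∈ N) : τ z / z ∈ N := by
  rcases eq_or_ne z 0 with rfl | hz0
  · simp
  rw [← InfiniteGalois.fixedField_fixingSubgroup N, mem_fixedField_iff]
  intro σ hσ
  have hσzn : (σ z) ^ n = z ^ n := by
    rw [← map_pow]
    exact (mem_fixingSubgroup_iff _ _).mp hσ _ hzn
  obtain ⟨k, hk⟩ := hμ.exists_eq_smul_of_pow_eq_pow hz0 hn hσzn
  have hk0 : algebraMap K Ω k ≠ 0 := fun h => hz0 <| (map_eq_zero σ).mp <| by
    rw [hk, Algebra.smul_def, h, zero_mul]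
  calc σ (τ z / z) = τ (σ z) / σ z := by
        rw [map_div₀, apply_comm_of_mem_sup_of_mem_fixingSubgroup hσ hτ hz]
    _ = (algebraMap K Ω k * τ z) / (algebraMap K Ω k * z) := by
        rw [hk, map_smul, Algebra.smul_def, Algebra.smul_def]
    _ = τ z / z := mul_div_mul_left _ _ hk0

-- Enlarging `N` so as to contain `x` puts `τ z / z` into `N` for every root `z` of `x` in `L ⊔ N`,
-- so that `τ x / x` is itself divisible in `N`.
theorem isOfFinOrder_apply_div_self [IsGalois K Ω] (hμ : ContainsRootsOfUnity K Ω)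
    (hK : StablyMulIndivisible K Ω) {L : IntermediateField K Ω} [Normal K L]
    (N : FiniteGaloisIntermediateField K Ω) {τ : Gal(Ω/K)} (hτ : τ ∈ L.fixingSubgroup) {x : Ω}
    (hx : DivisibleIn (L ⊔ N.toIntermediateField) x) : IsOfFinOrder (τ x / x) := by
  let N' := N ⊔ FiniteGaloisIntermediateField.adjoin K {x}
  have hxN' : x ∈ N'.toIntermediateField :=
    (le_sup_right : _ ≤ N') (FiniteGaloisIntermediateField.subset_adjoin K {x} rfl)
  have hle : L ⊔ N.toIntermediateField ≤ L ⊔ N'.toIntermediateField :=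
    sup_le_sup le_rfl (le_sup_left : N ≤ N')
  refine hK N'.toIntermediateField inferInstance _
    ⟨div_ne_zero ((map_ne_zero τ).mpr hx.1) hx.1, fun n hn => ?_⟩
  obtain ⟨z, hz, rfl⟩ := hx.2 n hn
  exact ⟨τ z / z, hμ.apply_div_self_mem_of_pow_mem hτ (hle hz) hn hxN', by rw [div_pow, map_pow]⟩

theorem mem_of_divisibleIn_sup [IsGalois K Ω] [IsAlgClosed Ω] (hμ : ContainsRootsOfUnity K Ω)
    (hK : StablyMulIndivisible K Ω) {L : IntermediateField K Ω} [Normal K L]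
    (N : FiniteGaloisIntermediateField K Ω) {x : Ω}
    (hx : DivisibleIn (L ⊔ N.toIntermediateField) x) : x ∈ L := by
  rw [← InfiniteGalois.fixedField_fixingSubgroup L, mem_fixedField_iff]
  intro τ hτ
  obtain ⟨n, hn, hτn⟩ := exists_pow_mem_fixingSubgroup_sup (N := N.toIntermediateField) hτ
  obtain ⟨y, hy, rfl⟩ := hx.2 n hn
  have hydiv : DivisibleIn (L ⊔ N.toIntermediateField) y := hμ.divisibleIn_of_pow hn hx
  obtain ⟨k, hk⟩ := hμ.exists_eq_smul_of_isOfFinOrder_div hydiv.1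
    (hμ.isOfFinOrder_apply_div_self hK N hτ hydiv)
  have hkn : k ^ n • y = y := by
    rw [← pow_apply_eq_pow_smul hk, (mem_fixingSubgroup_iff _ _).mp hτn y hy]
  have hkn1 : k ^ n = 1 := smul_left_injective K hydiv.1 (hkn.trans (one_smul K y).symm)
  rw [map_pow, hk, smul_pow, hkn1, one_smul]

theorem divSubfield_le [IsGalois K Ω] [IsAlgClosed Ω] (hμ : ContainsRootsOfUnity K Ω)
    (hK : StablyMulIndivisible K Ω) {L : IntermediateField K Ω} [Normal K L] {M : Subfield Ω}
    (hML : M ≤ L.toSubfield) : divSubfield M Ω ≤ L.toSubfield := by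
  refine Subfield.closure_le.mpr ?_
  rintro x ⟨E, hE, hx⟩
  obtain ⟨s, rfl⟩ : E.FG := essFiniteType_iff.mp inferInstance
  let N := FiniteGaloisIntermediateField.adjoin K (s : Set Ω)
  have hle : (adjoin M (s : Set Ω)).toSubfield ≤ (L ⊔ N.toIntermediateField).toSubfield := by
    rw [adjoin_toSubfield, Subfield.closure_le, Set.union_subset_iff]
    refine ⟨?_, (FiniteGaloisIntermediateField.subset_adjoin K _).trans
      (le_sup_right : _ ≤ L ⊔ N.toIntermediateField)⟩
    rintro _ ⟨m, rfl⟩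
    exact (le_sup_left : L ≤ L ⊔ N.toIntermediateField) (hML m.2)
  exact hμ.mem_of_divisibleIn_sup hK N (hx.mono hle)

end ContainsRootsOfUnity

end DivisibleElements

section FiniteExtension

variable {Ω : Type*} [Field Ω] {M : Subfield Ω}

theorem isAlgebraic_subfield_iff {a : Ω} :
    IsAlgebraic M a ↔ ∃ q : Polynomial Ω, q ≠ 0 ∧ (∀ i, q.coeff i ∈ M) ∧ q.eval a = 0 := by
  constructor
  · rintro ⟨q, hq, hqa⟩
    refine ⟨q.map (algebraMap M Ω), ?_, fun i => ?_, by rwa [Polynomial.eval_map_algebraMap]⟩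
    · exact (Polynomial.map_ne_zero_iff (algebraMap M Ω).injective).mpr hq
    · rw [Polynomial.coeff_map]
      exact (q.coeff i).2
  · rintro ⟨q, hq, hqM, hqa⟩
    have hlifts : q ∈ Polynomial.lifts (algebraMap M Ω) :=
      (Polynomial.lifts_iff_coeff_lifts q).mpr fun i => ⟨⟨_, hqM i⟩, rfl⟩
    obtain ⟨r, rfl⟩ := (Polynomial.mem_lifts q).mp hlifts
    rw [Polynomial.eval_map_algebraMap] at hqa
    exact ⟨r, fun h => hq (by rw [h, Polynomial.map_zero]), hqa⟩

theorem exists_finiteDimensional_toSubfield_eq_iff {E : Subfield Ω} :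
    (∃ E' : IntermediateField M Ω, FiniteDimensional M E' ∧ E'.toSubfield = E) ↔
      ∃ s : Finset Ω, (∀ a ∈ s, IsAlgebraic M a) ∧
        E = Subfield.closure ((M : Set Ω) ∪ ↑s) := by
  have hadjoin (s : Finset Ω) : (adjoin M (s : Set Ω)).toSubfield =
      Subfield.closure ((M : Set Ω) ∪ ↑s) := by
    rw [adjoin_toSubfield]
    congr 2
    exact Subtype.range_coe
  constructor
  · rintro ⟨E', hE', rfl⟩
    obtain ⟨s, rfl⟩ : E'.FG := essFiniteType_iff.mp inferInstance
    refine ⟨s, fun a ha => ?_, hadjoin s⟩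
    exact (isAlgebraic_iff (S := adjoin M (s : Set Ω)) (x := ⟨a, subset_adjoin M _ ha⟩)).mp
      (Algebra.IsAlgebraic.isAlgebraic _)
  · rintro ⟨s, hs, rfl⟩
    exact ⟨adjoin M s, finiteDimensional_adjoin fun a ha => (hs a ha).isIntegral, hadjoin s⟩

theorem divSubfield_eq_closure : divSubfield M Ω =
    Subfield.closure {x : Ω | ∃ E : Subfield Ω, M ≤ E ∧
      (∃ s : Finset Ω,
        (∀ a ∈ s, ∃ q : Polynomial Ω, q ≠ 0 ∧ (∀ i, q.coeff i ∈ M) ∧ q.eval a = 0) ∧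
        E = Subfield.closure ((M : Set Ω) ∪ ↑s)) ∧
      x ∈ E ∧ x ≠ 0 ∧ ∀ n : ℕ, 0 < n → ∃ y ∈ E, y ^ n = x} := by
  simp_rw [← isAlgebraic_subfield_iff, ← exists_finiteDimensional_toSubfield_eq_iff]
  refine congrArg Subfield.closure (Set.ext fun x => ⟨?_, ?_⟩)
  · rintro ⟨E, hE, hx⟩
    exact ⟨E.toSubfield, fun m hm => E.algebraMap_mem ⟨m, hm⟩, ⟨E, hE, rfl⟩, hx.mem, hx⟩
  · rintro ⟨_, -, ⟨E, hE, rfl⟩, -, hx⟩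
    exact ⟨E, hE, hx⟩

end FiniteExtension

theorem stmt15_general {K Ω : Type*} [Field K] [CharZero K] [Field Ω] [Algebra K Ω]
    [IsAlgClosure K Ω] (hμ : ContainsRootsOfUnity K Ω) (hK : StablyMulIndivisible K Ω)
    (L : IntermediateField K Ω) [Normal K L] (hL : L ≠ ⊤) (M : Subfield Ω)
    (hML : M ≤ L.toSubfield) : ¬ FiniteDimensional (divSubfield M Ω) Ω :=
  have : IsAlgClosed Ω := IsAlgClosure.isAlgClosed K
  hμ.not_finiteDimensional_of_le hL (hμ.divSubfield_le hK hML)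

/-- Let `K` be a field of characteristic `0` containing all roots of
unity, and `L ≠ K̄` a Galois extension of `K` inside the algebraic closure `Ω = K̄`.
Assume `K` is stably `p`-`×μ`-indivisible for some prime `p` (every `p`-divisible
element of the multiplicative group of any finite extension of `K` is a root of unity).
Then for any subfield `M` of `L` over which `L` is algebraic, the extension `K̄/M_div`
is infinite, where `M_div` is the subfield generated over `ℚ` by the divisible elements
of the multiplicative groups of all finite extensions of `M`; i.e. `M` is TKND.

(A finite extension of `M` inside `Ω` is encoded as the subfield generated by `M` and a
finite set of elements algebraic over `M`; "algebraic over the subfield `M`" is encoded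
by a nonzero polynomial with coefficients in `M`.) -/
theorem stmt15 (p : ℕ) (hp : p.Prime) (K : Type) [Field K] [CharZero K]
    (hroots : ∀ ζ : AlgebraicClosure K, (∃ n : ℕ, 0 < n ∧ ζ ^ n = 1) →
      ζ ∈ (algebraMap K (AlgebraicClosure K)).range)
    (hstable : ∀ E : IntermediateField K (AlgebraicClosure K), FiniteDimensional K ↥E →
      ∀ x : AlgebraicClosure K, x ∈ E → x ≠ 0 →
        (∀ n : ℕ, ∃ y ∈ E, y ^ p ^ n = x) → ∃ m : ℕ, 0 < m ∧ x ^ m = 1)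
    (L : IntermediateField K (AlgebraicClosure K)) (hGal : IsGalois K ↥L) (hL : L ≠ ⊤)
    (M : Subfield (AlgebraicClosure K)) (hML : (M : Set (AlgebraicClosure K)) ⊆ L)
    (halg : ∀ x ∈ L, ∃ q : Polynomial (AlgebraicClosure K),
      q ≠ 0 ∧ (∀ i, q.coeff i ∈ M) ∧ q.eval x = 0) :
    ¬ FiniteDimensional
        ↥(Subfield.closure {x : AlgebraicClosure K |
            ∃ E : Subfield (AlgebraicClosure K), M ≤ E ∧
              (∃ s : Finset (AlgebraicClosure K),
                (∀ a ∈ s, ∃ q : Polynomial (AlgebraicClosure K),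
                  q ≠ 0 ∧ (∀ i, q.coeff i ∈ M) ∧ q.eval a = 0) ∧
                E = Subfield.closure ((M : Set (AlgebraicClosure K)) ∪ ↑s)) ∧
              x ∈ E ∧ x ≠ 0 ∧ ∀ n : ℕ, 0 < n → ∃ y ∈ E, y ^ n = x})
        (AlgebraicClosure K) := by
  rw [← divSubfield_eq_closure]
  exact stmt15_general (fun ζ hζ => hroots ζ (isOfFinOrder_iff_pow_eq_one.mp hζ))
    (fun E hE x hx => isOfFinOrder_iff_pow_eq_one.mpr <|
      hstable E hE x hx.mem hx.1 fun n => hx.2 _ (pow_pos hp.pos n)) L hL M hML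
end
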